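/- arXiv:1405.3375 — 2 statements merged into one kernel-verified Lean document; each statement's English description precedes it below -/
import Mathlib

section
/- Let M have finite Gorenstein weak injective dimension n. Then M admits an injective (monomorphic) Gorenstein weak injective preenvelope φ: M → G whose cokernel V satisfies id_R(V) = n − 1 (with V = 0 when n = 0). Moreover if wid_R(M) < ∞ then G is injective. -/
open CategoryTheory

universe u

noncomputable section

variable (R : Type u) [Ring R]

/-- Vanishing of `Ext^n_R(N, M)` for left `R`-modules, expressed via the `Ext` bifunctor
on the `ℤ`-linear abelian category `ModuleCat R`. -/
def ExtVanish (n : ℕ) (N M : ModuleCat.{u} R) : Prop :=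
  Subsingleton (((_root_.Ext ℤ (ModuleCat.{u} R) n).obj (Opposite.op N)).obj M)

/-- An `R`-module is super finitely presented if it admits a resolution by
finitely generated projective modules. -/
def SuperFinitelyPresented (N : ModuleCat.{u} R) : Prop :=
  ∃ (F : ℕ → ModuleCat.{u} R) (d : ∀ n, F (n + 1) →ₗ[R] F n) (ε : F 0 →ₗ[R] N),
    (∀ n, Module.Finite R (F n)) ∧ (∀ n, Module.Projective R (F n)) ∧
    Function.Surjective ε ∧ Function.Exact (d 0) ε ∧
    (∀ n, Function.Exact (d (n + 1)) (d n))

/-- An `R`-module `W` is weak injective if `Ext^1_R(N, W) = 0` for every super finitely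
presented module `N`. -/
def WeakInjective (W : ModuleCat.{u} R) : Prop :=
  ∀ N : ModuleCat.{u} R, SuperFinitelyPresented R N → ExtVanish R 1 N W

/-- `wid_R M ≤ n` : `Ext^{n+1}_R(N, M) = 0` for every super finitely presented `N`. -/
def WidLE (M : ModuleCat.{u} R) (n : ℕ) : Prop :=
  ∀ N : ModuleCat.{u} R, SuperFinitelyPresented R N → ExtVanish R (n + 1) N M

/-- The weak injective dimension, as an element of `ℕ∞`. -/
def Wid (M : ModuleCat.{u} R) : ℕ∞ :=
  sInf {c : ℕ∞ | ∃ n : ℕ, c = n ∧ WidLE R M n}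

/-- A doubly infinite exact complex of injective modules which stays exact after applying
`Hom_R(W, -)` for every module `W` in the test class `𝒯`. -/
def IsTotallyAcyclicInjComplex (𝒯 : ModuleCat.{u} R → Prop)
    (I : ℤ → ModuleCat.{u} R) (d : ∀ n : ℤ, I n →ₗ[R] I (n + 1)) : Prop :=
  (∀ n, Module.Injective R (I n)) ∧
  (∀ n, Function.Exact (d n) (d (n + 1))) ∧
  (∀ W : ModuleCat.{u} R, 𝒯 W → ∀ n,
    Function.Exact (fun g : W →ₗ[R] I n => (d n).comp g)
      (fun g : W →ₗ[R] I (n + 1) => (d (n + 1)).comp g))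

/-- `M` is Gorenstein injective relative to the test class `𝒯` : `M` is the cokernel
`Coker (I_1 → I_0)` of a `Hom(𝒯, -)`-exact exact complex of injective modules. -/
def GorensteinRelInjective (𝒯 : ModuleCat.{u} R → Prop) (M : ModuleCat.{u} R) : Prop :=
  ∃ (I : ℤ → ModuleCat.{u} R) (d : ∀ n : ℤ, I n →ₗ[R] I (n + 1)) (π : I 0 →ₗ[R] M),
    IsTotallyAcyclicInjComplex R 𝒯 I d ∧
    Function.Surjective π ∧ Function.Exact (d (-1)) π

/-- Gorenstein weak injective modules: the test class is that of weak injective modules. -/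
def GorensteinWeakInjective (M : ModuleCat.{u} R) : Prop :=
  GorensteinRelInjective R (WeakInjective R) M

/-- Gorenstein injective modules: the test class is that of injective modules. -/
def GorensteinInjective (M : ModuleCat.{u} R) : Prop :=
  GorensteinRelInjective R (fun E => Module.Injective R E) M

/-- The data of an exact sequence `0 → M → G^0 → ⋯ → G^n → 0` (the modules `G^i` for
`i > n` being trivial). -/
def IsFiniteCoresolution (M : ModuleCat.{u} R) (n : ℕ) (G : ℕ → ModuleCat.{u} R)
    (d : ∀ i, G i →ₗ[R] G (i + 1)) (ε : M →ₗ[R] G 0) : Prop :=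
  Function.Injective ε ∧ Function.Exact ε (d 0) ∧
  (∀ i, Function.Exact (d i) (d (i + 1))) ∧
  (∀ i, n < i → ∀ x : G i, x = 0)

/-- `Gwid_R M ≤ n` : `M` has a coresolution of length `n` by Gorenstein weak injective
modules. -/
def GwidLE (M : ModuleCat.{u} R) (n : ℕ) : Prop :=
  ∃ (G : ℕ → ModuleCat.{u} R) (d : ∀ i, G i →ₗ[R] G (i + 1)) (ε : M →ₗ[R] G 0),
    IsFiniteCoresolution R M n G d ε ∧ ∀ i, GorensteinWeakInjective R (G i)

/-- The Gorenstein weak injective dimension, as an element of `ℕ∞`. -/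
def Gwid (M : ModuleCat.{u} R) : ℕ∞ :=
  sInf {c : ℕ∞ | ∃ n : ℕ, c = n ∧ GwidLE R M n}

/-- `Gid_R M ≤ n`, via coresolutions by Gorenstein injective modules. -/
def GidLE (M : ModuleCat.{u} R) (n : ℕ) : Prop :=
  ∃ (G : ℕ → ModuleCat.{u} R) (d : ∀ i, G i →ₗ[R] G (i + 1)) (ε : M →ₗ[R] G 0),
    IsFiniteCoresolution R M n G d ε ∧ ∀ i, GorensteinInjective R (G i)

/-- The Gorenstein injective dimension, as an element of `ℕ∞`. -/
def Gid (M : ModuleCat.{u} R) : ℕ∞ :=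
  sInf {c : ℕ∞ | ∃ n : ℕ, c = n ∧ GidLE R M n}

/-- `id_R M ≤ n`, via coresolutions by injective modules. -/
def IdLE (M : ModuleCat.{u} R) (n : ℕ) : Prop :=
  ∃ (G : ℕ → ModuleCat.{u} R) (d : ∀ i, G i →ₗ[R] G (i + 1)) (ε : M →ₗ[R] G 0),
    IsFiniteCoresolution R M n G d ε ∧ ∀ i, Module.Injective R (G i)

/-- The injective dimension, as an element of `ℕ∞`. -/
def Idim (M : ModuleCat.{u} R) : ℕ∞ :=
  sInf {c : ℕ∞ | ∃ n : ℕ, c = n ∧ IdLE R M n}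

/-- The data of an exact sequence `0 → P_n → ⋯ → P_0 → M → 0`. -/
def IsFiniteResolution (M : ModuleCat.{u} R) (n : ℕ) (P : ℕ → ModuleCat.{u} R)
    (d : ∀ i, P (i + 1) →ₗ[R] P i) (ε : P 0 →ₗ[R] M) : Prop :=
  Function.Surjective ε ∧ Function.Exact (d 0) ε ∧
  (∀ i, Function.Exact (d (i + 1)) (d i)) ∧
  (∀ i, n < i → ∀ x : P i, x = 0)

/-- `pd_R M ≤ n`, via resolutions by projective modules. -/
def PdLE (M : ModuleCat.{u} R) (n : ℕ) : Prop :=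
  ∃ (P : ℕ → ModuleCat.{u} R) (d : ∀ i, P (i + 1) →ₗ[R] P i) (ε : P 0 →ₗ[R] M),
    IsFiniteResolution R M n P d ε ∧ ∀ i, Module.Projective R (P i)

end

variable (R : Type u) [Ring R]

/-- A short exact sequence `0 → L → M → N → 0` of `R`-modules. -/
def ShortExactSeq (L M N : ModuleCat.{u} R) (f : L →ₗ[R] M) (g : M →ₗ[R] N) : Prop :=
  Function.Injective f ∧ Function.Surjective g ∧ Function.Exact f g

/-- Exactness of `0 → Hom(C, X) → Hom(B, X) → Hom(A, X) → 0` induced by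
`0 → A → B → C → 0`. -/
def HomContraExact (X : ModuleCat.{u} R) {A B C : ModuleCat.{u} R}
    (f : A →ₗ[R] B) (g : B →ₗ[R] C) : Prop :=
  Function.Injective (fun h : C →ₗ[R] X => h.comp g) ∧
  Function.Exact (fun h : C →ₗ[R] X => h.comp g) (fun h : B →ₗ[R] X => h.comp f) ∧
  Function.Surjective (fun h : B →ₗ[R] X => h.comp f)

/-- A short exact sequence is `GWI`-copure exact if `Hom_R(-, X)` leaves it exact for
every Gorenstein weak injective module `X`. -/
def GWICopureExact {A B C : ModuleCat.{u} R} (f : A →ₗ[R] B) (g : B →ₗ[R] C) : Prop :=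
  ShortExactSeq R A B C f g ∧
  ∀ X : ModuleCat.{u} R, GorensteinWeakInjective R X → HomContraExact R X f g

/-- `M` is `GWI`-copure injective if `Hom_R(-, M)` is exact on every `GWI`-copure exact
sequence. -/
def GWICopureInjectiveMod (M : ModuleCat.{u} R) : Prop :=
  ∀ (A B C : ModuleCat.{u} R) (f : A →ₗ[R] B) (g : B →ₗ[R] C),
    GWICopureExact R f g → HomContraExact R M f g

/-- `φ : M → G` is a Gorenstein weak injective preenvelope of `M`. -/
def GWIPreenvelope (M G : ModuleCat.{u} R) (φ : M →ₗ[R] G) : Prop :=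
  GorensteinWeakInjective R G ∧
  ∀ G' : ModuleCat.{u} R, GorensteinWeakInjective R G' →
    ∀ f : M →ₗ[R] G', ∃ g : G →ₗ[R] G', g.comp φ = f

/-- A `WI`-pure Tate injective resolution of `M` : an injective resolution
`0 → M → E^0 → E^1 → ⋯`, a `WI`-pure exact complex `T` of injectives, and a chain map
`u : E → T` which is an isomorphism in all sufficiently large degrees. -/
def WIPureTateInjectiveResolution (M : ModuleCat.{u} R)
    (E : ℕ → ModuleCat.{u} R) (dE : ∀ n, E n →ₗ[R] E (n + 1)) (ε : M →ₗ[R] E 0)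
    (T : ℤ → ModuleCat.{u} R) (dT : ∀ n : ℤ, T n →ₗ[R] T (n + 1))
    (u : ∀ n : ℕ, E n →ₗ[R] T n) : Prop :=
  (∀ n, Module.Injective R (E n)) ∧ Function.Injective ε ∧
  Function.Exact ε (dE 0) ∧ (∀ n, Function.Exact (dE n) (dE (n + 1))) ∧
  IsTotallyAcyclicInjComplex R (WeakInjective R) T dT ∧
  (∀ n : ℕ, (dT n).comp (u n) = (u (n + 1)).comp (dE n)) ∧
  ∃ N : ℕ, ∀ n, N ≤ n → Function.Bijective (u n)

/-- Vanishing of the relative Tate cohomology `Êxt^i_GWI(N, M)` for all `i ∈ ℤ`,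
computed from the `WI`-pure exact complex `T` : the complex `Hom_R(N, T)` is exact. -/
def ExtHatVanishesAll (N : ModuleCat.{u} R) (T : ℤ → ModuleCat.{u} R)
    (dT : ∀ n : ℤ, T n →ₗ[R] T (n + 1)) : Prop :=
  ∀ n : ℤ, Function.Exact (fun g : N →ₗ[R] T n => (dT n).comp g)
    (fun g : N →ₗ[R] T (n + 1) => (dT (n + 1)).comp g)

/-!
The kernels of a totally acyclic complex of injectives form a class of modules that is right
`Ext¹`-orthogonal to the weak injectives and closed under taking syzygies and cosyzygies with
respect to injectives; conversely, splicing syzygy sequences shows that every module in such a class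
is Gorenstein weak injective. The horseshoe constructions keep these properties under extensions, so
Gorenstein weak injective modules are closed under extensions.

Let `0 → M → X → B → 0` be the start of a coresolution. By induction on its length `B` embeds in a
Gorenstein weak injective `G` with cokernel `V` of small injective dimension. Take a syzygy
`0 → Z → I → G → 0`. Pulling `I → G` back first along `B → G` and then along `X → B` gives
`0 → M → Y → U → 0`, in which `Y` is an extension of `X` by `Z` and `0 → U → I → V → 0` is exact; so
`Y` is Gorenstein weak injective and `id U ≤ id V + 1`.

By dimension shifting `Ext¹(V, G') = 0` for `V` of finite injective dimension and `G'` Gorenstein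
weak injective, so such an embedding is a preenvelope. A smaller injective dimension of the cokernel
would give a shorter coresolution of `M`. If `wid M` is finite then so is `wid G`, and cosyzygies
reduce the injectivity of `G` to the case where `G` is weak injective; there a syzygy sequence
`0 → A → I → G → 0` splits because `Ext¹(G, A) = 0`.
-/

section

variable {R}

section AbelianExt

open Abelian Limits

variable {C : Type*} [Category* C] [Abelian C]

lemma subsingleton_leftDerivedExt_succ_iff_of_projectiveResolution [Linear ℤ C]
    [EnoughProjectives C] {X Y : C} (P : ProjectiveResolution X) (n : ℕ) :
    Subsingleton (((_root_.Ext ℤ C (n + 1)).obj (.op X)).obj Y) ↔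
      ∀ f : P.complex.X (n + 1) ⟶ Y, P.complex.d (n + 2) (n + 1) ≫ f = 0 →
        ∃ g, P.complex.d (n + 1) n ≫ g = f := by
  rw [← ModuleCat.isZero_iff_subsingleton, (P.isoExt (R := ℤ) (n + 1) Y).isZero_iff,
    ← HomologicalComplex.exactAt_iff_isZero_homology,
    HomologicalComplex.exactAt_iff' _ n (n + 1) (n + 2) (by simp) (by simp),
    ShortComplex.moduleCat_exact_iff]
  exact Iff.rfl

variable [HasExt C]

lemma subsingleton_ext_succ_iff_of_projectiveResolution {X Y : C}
    (P : ProjectiveResolution X) (n : ℕ) :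
    Subsingleton (Ext X Y (n + 1)) ↔
      ∀ f : P.complex.X (n + 1) ⟶ Y, P.complex.d (n + 2) (n + 1) ≫ f = 0 →
        ∃ g, P.complex.d (n + 1) n ≫ g = f := by
  rw [subsingleton_iff_forall_eq 0]
  refine ⟨fun h f hf => ?_, fun h α => ?_⟩
  · exact (P.extMk_eq_zero_iff f (n + 2) rfl hf n rfl).1 (h _)
  · obtain ⟨f, hf, rfl⟩ := P.extMk_surjective α (n + 2) rfl
    exact (P.extMk_eq_zero_iff f (n + 2) rfl hf n rfl).2 (h f hf)

variable {S : ShortComplex C} (hS : S.ShortExact)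
include hS

section Covariant

variable {W : C} {n : ℕ}

lemma subsingleton_ext_to_X₁ (h₃ : Subsingleton (Ext W S.X₃ n))
    (h₂ : Subsingleton (Ext W S.X₂ (n + 1))) : Subsingleton (Ext W S.X₁ (n + 1)) := by
  refine subsingleton_of_forall_eq 0 fun x => ?_
  obtain ⟨y, rfl⟩ := Ext.covariant_sequence_exact₁ W hS x (Subsingleton.elim _ _) rfl
  rw [Subsingleton.elim y 0, Ext.zero_comp]

lemma subsingleton_ext_to_X₂ (h₁ : Subsingleton (Ext W S.X₁ n))
    (h₃ : Subsingleton (Ext W S.X₃ n)) : Subsingleton (Ext W S.X₂ n) := by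
  refine subsingleton_of_forall_eq 0 fun x => ?_
  obtain ⟨y, rfl⟩ := Ext.covariant_sequence_exact₂ W hS x (Subsingleton.elim _ _)
  rw [Subsingleton.elim y 0, Ext.zero_comp]

lemma subsingleton_ext_to_X₃ (h₂ : Subsingleton (Ext W S.X₂ n))
    (h₁ : Subsingleton (Ext W S.X₁ (n + 1))) : Subsingleton (Ext W S.X₃ n) := by
  refine subsingleton_of_forall_eq 0 fun x => ?_
  obtain ⟨y, rfl⟩ := Ext.covariant_sequence_exact₃ W hS x rfl (Subsingleton.elim _ _)
  rw [Subsingleton.elim y 0, Ext.zero_comp]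

lemma exists_lift_of_subsingleton_ext_one (h : Subsingleton (Ext W S.X₁ 1)) (f : W ⟶ S.X₃) :
    ∃ g, g ≫ S.g = f := by
  obtain ⟨α, hα⟩ := Ext.covariant_sequence_exact₃ W hS (Ext.mk₀ f) rfl (Subsingleton.elim _ _)
  obtain ⟨g, rfl⟩ := Ext.homEquiv₀.symm.surjective α
  exact ⟨g, Ext.homEquiv₀.symm.injective (by simpa using hα)⟩

lemma subsingleton_ext_one_of_forall_exists_lift [Injective S.X₂]
    (h : ∀ f : W ⟶ S.X₃, ∃ g, g ≫ S.g = f) : Subsingleton (Ext W S.X₁ 1) := by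
  refine subsingleton_of_forall_eq 0 fun x => ?_
  obtain ⟨y, rfl⟩ := Ext.covariant_sequence_exact₁ W hS x (Ext.eq_zero_of_injective _) rfl
  obtain ⟨f, rfl⟩ := Ext.homEquiv₀.symm.surjective y
  obtain ⟨g, rfl⟩ := h f
  simp [← Ext.mk₀_comp_mk₀]

end Covariant

section Contravariant

variable {Y : C} {n : ℕ}

lemma subsingleton_ext_from_X₁ (h₂ : Subsingleton (Ext S.X₂ Y n))
    (h₃ : Subsingleton (Ext S.X₃ Y (n + 1))) : Subsingleton (Ext S.X₁ Y n) := by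
  refine subsingleton_of_forall_eq 0 fun x => ?_
  obtain ⟨y, rfl⟩ :=
    Ext.contravariant_sequence_exact₁ hS Y x (add_comm 1 n) (Subsingleton.elim _ _)
  rw [Subsingleton.elim y 0, Ext.comp_zero]

lemma subsingleton_ext_from_X₃ (h₁ : Subsingleton (Ext S.X₁ Y n))
    (h₂ : Subsingleton (Ext S.X₂ Y (n + 1))) : Subsingleton (Ext S.X₃ Y (n + 1)) := by
  refine subsingleton_of_forall_eq 0 fun x => ?_
  obtain ⟨y, rfl⟩ :=
    Ext.contravariant_sequence_exact₃ hS Y x (Subsingleton.elim _ _) (add_comm 1 n)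
  rw [Subsingleton.elim y 0, Ext.comp_zero]

lemma exists_extension_of_subsingleton_ext_one (h : Subsingleton (Ext S.X₃ Y 1)) (f : S.X₁ ⟶ Y) :
    ∃ g, S.f ≫ g = f := by
  obtain ⟨α, hα⟩ :=
    Ext.contravariant_sequence_exact₁ hS Y (Ext.mk₀ f) rfl (Subsingleton.elim _ _)
  obtain ⟨g, rfl⟩ := Ext.homEquiv₀.symm.surjective α
  exact ⟨g, Ext.homEquiv₀.symm.injective (by simpa using hα)⟩

lemma injective_X₁_of_subsingleton_ext_one [Injective S.X₂]
    (h : Subsingleton (Ext S.X₃ S.X₁ 1)) : Injective S.X₁ := by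
  obtain ⟨r, hr⟩ := exists_extension_of_subsingleton_ext_one hS h (𝟙 S.X₁)
  exact Retract.injective ⟨S.f, r, hr⟩

end Contravariant

end AbelianExt

lemma extVanish_succ_iff {N M : ModuleCat.{u} R} {n : ℕ} :
    ExtVanish R (n + 1) N M ↔ Subsingleton (Abelian.Ext N M (n + 1)) :=
  let P := projectiveResolution N
  (subsingleton_leftDerivedExt_succ_iff_of_projectiveResolution P n).trans
    (subsingleton_ext_succ_iff_of_projectiveResolution P n).symm

lemma SuperFinitelyPresented.exists_syzygy {N : ModuleCat.{u} R}
    (hN : SuperFinitelyPresented R N) :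
    ∃ S : ShortComplex (ModuleCat.{u} R), S.ShortExact ∧ SuperFinitelyPresented R S.X₁ ∧
      Projective S.X₂ ∧ S.X₃ = N := by
  obtain ⟨F, d, ε, hfin, hproj, hε, hd₀, hd⟩ := hN
  have hdε (x : F 1) : d 0 x ∈ LinearMap.ker ε := hd₀.apply_apply_eq_zero x
  refine ⟨ε.shortComplexKer, ε.shortExact_shortComplexKer hε, ?_,
    (IsProjective.iff_projective (F 0)).1 (hproj 0), rfl⟩
  refine ⟨fun n => F (n + 1), fun n => d (n + 1), (d 0).codRestrict _ hdε,
    fun n => hfin (n + 1), fun n => hproj (n + 1), ?_, fun x => ?_, fun n => hd (n + 1)⟩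
  · rintro ⟨x, hx⟩
    exact ((hd₀ x).1 hx).imp fun y hy => Subtype.ext hy
  · exact Subtype.ext_iff.trans (hd 0 x)

lemma widLE_iff_subsingleton_ext {M : ModuleCat.{u} R} {n : ℕ} :
    WidLE R M n ↔
      ∀ N, SuperFinitelyPresented R N → Subsingleton (Abelian.Ext N M (n + 1)) :=
  forall₂_congr fun _ _ => extVanish_succ_iff

namespace WidLE

lemma of_hasInjectiveDimensionLT {M : ModuleCat.{u} R} {n : ℕ}
    [HasInjectiveDimensionLT M (n + 1)] : WidLE R M n :=
  widLE_iff_subsingleton_ext.2 fun N _ =>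
    HasInjectiveDimensionLT.subsingleton M (n + 1) (n + 1) le_rfl N

lemma succ {M : ModuleCat.{u} R} {n : ℕ} (h : WidLE R M n) : WidLE R M (n + 1) := by
  refine widLE_iff_subsingleton_ext.2 fun N hN => ?_
  obtain ⟨S, hS, hK, _, rfl⟩ := hN.exists_syzygy
  exact subsingleton_ext_from_X₃ hS (widLE_iff_subsingleton_ext.1 h _ hK)
    (Abelian.Ext.subsingleton_of_projective _ _ _)

lemma mono {M : ModuleCat.{u} R} {m n : ℕ} (h : WidLE R M m) (hmn : m ≤ n) : WidLE R M n :=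
  Nat.le_induction h (fun _ _ => succ) n hmn

variable {S : ShortComplex (ModuleCat.{u} R)} (hS : S.ShortExact) {n : ℕ}
include hS

lemma X₂ (h₁ : WidLE R S.X₁ n) (h₃ : WidLE R S.X₃ n) : WidLE R S.X₂ n :=
  widLE_iff_subsingleton_ext.2 fun N hN => subsingleton_ext_to_X₂ hS
    (widLE_iff_subsingleton_ext.1 h₁ N hN) (widLE_iff_subsingleton_ext.1 h₃ N hN)

lemma X₃_of_injective [Injective S.X₂] (h₁ : WidLE R S.X₁ (n + 1)) : WidLE R S.X₃ n :=
  widLE_iff_subsingleton_ext.2 fun N hN => subsingleton_ext_to_X₃ hS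
    (Abelian.Ext.subsingleton_of_injective _ _ _) (widLE_iff_subsingleton_ext.1 h₁ N hN)

end WidLE

section ShortExact

open Limits ZeroObject

variable {C : Type*} [Category* C] [Abelian C]

lemma shortExact_cokernel_of_mono {S T : ShortComplex C} (hS : S.ShortExact) (hT : T.ShortExact)
    (v : S ⟶ T) [Mono v] : (cokernel v).ShortExact := by
  let D : ShortComplex.SnakeInput C :=
    { L₀ := 0
      L₁ := S
      L₂ := T
      L₃ := cokernel v
      v₀₁ := 0
      v₁₂ := v
      v₂₃ := cokernel.π v
      w₁₃ := cokernel.condition v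
      h₀ := KernelFork.IsLimit.ofMonoOfIsZero _ inferInstance (isZero_zero _)
      h₃ := cokernelIsCokernel v
      L₁_exact := hS.exact
      epi_L₁_g := hS.epi_g
      L₂_exact := hT.exact
      mono_L₂_f := hT.mono_f }
  have hδ : D.δ = 0 := (ShortComplex.π₃.map_isZero (isZero_zero _)).eq_of_src _ _
  have : Epi D.L₂.g := hT.epi_g
  exact { exact := D.L₃_exact
          mono_f := (ShortComplex.exact_iff_mono _ hδ).1 D.L₂'_exact
          epi_g := D.epi_L₃_g }

lemma shortExact_kernel_of_epi {S T : ShortComplex C} (hS : S.ShortExact) (hT : T.ShortExact)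
    (v : S ⟶ T) [Epi v] : (kernel v).ShortExact := by
  let D : ShortComplex.SnakeInput C :=
    { L₀ := kernel v
      L₁ := S
      L₂ := T
      L₃ := 0
      v₀₁ := kernel.ι v
      v₁₂ := v
      v₂₃ := 0
      w₀₂ := kernel.condition v
      h₀ := kernelIsKernel v
      h₃ := CokernelCofork.IsColimit.ofEpiOfIsZero _ inferInstance (isZero_zero _)
      L₁_exact := hS.exact
      epi_L₁_g := hS.epi_g
      L₂_exact := hT.exact
      mono_L₂_f := hT.mono_f }
  have hδ : D.δ = 0 := (ShortComplex.π₁.map_isZero (isZero_zero _)).eq_of_tgt _ _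
  have : Mono D.L₁.f := hS.mono_f
  exact { exact := D.L₀_exact
          mono_f := D.mono_L₀_f
          epi_g := (ShortComplex.exact_iff_epi _ hδ).1 D.L₁'_exact }

lemma mono_of_mono_τ₁_τ₃ {S T : ShortComplex C} (hS : S.ShortExact) (hT : T.ShortExact)
    (v : S ⟶ T) [Mono v.τ₁] [Mono v.τ₃] : Mono v := by
  have := hS.mono_f
  have := hT.mono_f
  have := ShortComplex.mono_τ₂_of_exact_of_mono v hS.exact
  exact ⟨fun a b h => ShortComplex.hom_ext _ _
    ((cancel_mono v.τ₁).1 congr(($h).τ₁)) ((cancel_mono v.τ₂).1 congr(($h).τ₂))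
    ((cancel_mono v.τ₃).1 congr(($h).τ₃))⟩

lemma epi_of_epi_τ₁_τ₃ {S T : ShortComplex C} (hS : S.ShortExact) (hT : T.ShortExact)
    (v : S ⟶ T) [Epi v.τ₁] [Epi v.τ₃] : Epi v := by
  have := hS.epi_g
  have := hT.epi_g
  have := ShortComplex.epi_τ₂_of_exact_of_epi v hT.exact
  exact ⟨fun a b h => ShortComplex.hom_ext _ _
    ((cancel_epi v.τ₁).1 congr(($h).τ₁)) ((cancel_epi v.τ₂).1 congr(($h).τ₂))
    ((cancel_epi v.τ₃).1 congr(($h).τ₃))⟩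

lemma shortExact_iso_comp_comp_iso {S : ShortComplex C} (hS : S.ShortExact) {A B : C}
    (eA : S.X₁ ≅ A) (eB : S.X₃ ≅ B) :
    ∃ w, (ShortComplex.mk (eA.inv ≫ S.f) (S.g ≫ eB.hom) w).ShortExact :=
  ⟨by simp, ShortComplex.shortExact_of_iso (ShortComplex.isoMk eA (Iso.refl _) eB) hS⟩

end ShortExact

section InjectiveSyzygy

open Limits

variable {C : Type*} [Category* C] [Abelian C]

/-- `A` is a first syzygy of `B` with respect to an injective object: there is a short exact
sequence `0 → A → I → B → 0` with `I` injective. -/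
def IsInjectiveSyzygy (A B : C) : Prop :=
  ∃ (I : C) (i : A ⟶ I) (p : I ⟶ B) (w : i ≫ p = 0),
    Injective I ∧ (ShortComplex.mk i p w).ShortExact

namespace IsInjectiveSyzygy

lemma of_shortExact {S : ShortComplex C} (hS : S.ShortExact) [Injective S.X₂] :
    IsInjectiveSyzygy S.X₁ S.X₃ :=
  ⟨S.X₂, S.f, S.g, S.zero, ‹_›, hS⟩

lemma of_iso {A A' B B' : C} (h : IsInjectiveSyzygy A B) (eA : A ≅ A') (eB : B ≅ B') :
    IsInjectiveSyzygy A' B' := by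
  obtain ⟨I, i, p, w, hI, hS⟩ := h
  obtain ⟨w', hS'⟩ := shortExact_iso_comp_comp_iso hS eA eB
  exact ⟨I, _, _, w', hI, hS'⟩

lemma exists_cosyzygy [EnoughInjectives C] (A : C) : ∃ B, IsInjectiveSyzygy A B :=
  ⟨_, _, Injective.ι A, cokernel.π _, cokernel.condition _, inferInstance,
    { exact := ShortComplex.exact_cokernel _ }⟩

lemma exists_shortExact_of_X₁_X₃ {S : ShortComplex C} (hS : S.ShortExact) {A' C' : C}
    (h₁ : IsInjectiveSyzygy S.X₁ A') (h₃ : IsInjectiveSyzygy S.X₃ C') :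
    ∃ (Y : C) (f : A' ⟶ Y) (g : Y ⟶ C') (w : f ≫ g = 0),
      (ShortComplex.mk f g w).ShortExact ∧ IsInjectiveSyzygy S.X₂ Y := by
  obtain ⟨I, i, p, _, _, hI⟩ := h₁
  obtain ⟨J, j, q, _, _, hJ⟩ := h₃
  have := hS.mono_f
  let B := ShortComplex.mk (biprod.inl : I ⟶ I ⊞ J) (biprod.snd : I ⊞ J ⟶ J) (by simp)
  have hB : B.ShortExact := (ShortComplex.Splitting.ofHasBinaryBiproduct I J).shortExact
  let v : S ⟶ B :=
    { τ₁ := i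
      τ₂ := biprod.lift (Injective.factorThru i S.f) (S.g ≫ j)
      τ₃ := j
      comm₁₂ := by apply biprod.hom_ext <;> simp [B]
      comm₂₃ := by simp [B] }
  have : Mono v.τ₁ := hI.mono_f
  have : Mono v.τ₃ := hJ.mono_f
  have := mono_of_mono_τ₁_τ₃ hS hB v
  let V := ShortComplex.mk v (cokernel.π v) (cokernel.condition v)
  have hV : V.ShortExact := { exact := ShortComplex.exact_cokernel v }
  have : Injective (V.map ShortComplex.π₂).X₂ := inferInstanceAs (Injective (I ⊞ J))
  let e₁ : (cokernel v).X₁ ≅ A' :=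
    (hV.map_of_exact ShortComplex.π₁).gIsCokernel.coconePointUniqueUpToIso hI.gIsCokernel
  let e₃ : (cokernel v).X₃ ≅ C' :=
    (hV.map_of_exact ShortComplex.π₃).gIsCokernel.coconePointUniqueUpToIso hJ.gIsCokernel
  obtain ⟨w, hT⟩ := shortExact_iso_comp_comp_iso (shortExact_cokernel_of_mono hS hB v) e₁ e₃
  exact ⟨_, _, _, w, hT, of_shortExact (hV.map_of_exact ShortComplex.π₂)⟩

lemma exists_shortExact_to_X₁_X₃ [HasExt C] {S : ShortComplex C} (hS : S.ShortExact) {A' C' : C}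
    (h₁ : IsInjectiveSyzygy A' S.X₁) (h₃ : IsInjectiveSyzygy C' S.X₃)
    (hext : ∀ J : C, Injective J → Subsingleton (Abelian.Ext J S.X₁ 1)) :
    ∃ (Y : C) (f : A' ⟶ Y) (g : Y ⟶ C') (w : f ≫ g = 0),
      (ShortComplex.mk f g w).ShortExact ∧ IsInjectiveSyzygy Y S.X₂ := by
  obtain ⟨I, i, p, _, _, hI⟩ := h₁
  obtain ⟨J, j, q, _, hJinj, hJ⟩ := h₃
  obtain ⟨β, hβ⟩ := exists_lift_of_subsingleton_ext_one hS (hext J hJinj) q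
  let B := ShortComplex.mk (biprod.inl : I ⟶ I ⊞ J) (biprod.snd : I ⊞ J ⟶ J) (by simp)
  have hB : B.ShortExact := (ShortComplex.Splitting.ofHasBinaryBiproduct I J).shortExact
  let v : B ⟶ S :=
    { τ₁ := p
      τ₂ := biprod.desc (p ≫ S.f) β
      τ₃ := q
      comm₁₂ := by simp [B]
      comm₂₃ := by apply biprod.hom_ext' <;> simp [B, hβ] }
  have : Epi v.τ₁ := hI.epi_g
  have : Epi v.τ₃ := hJ.epi_g
  have := epi_of_epi_τ₁_τ₃ hB hS v
  let V := ShortComplex.mk (kernel.ι v) v (kernel.condition v)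
  have hV : V.ShortExact := { exact := ShortComplex.exact_kernel v }
  have : Injective (V.map ShortComplex.π₂).X₂ := inferInstanceAs (Injective (I ⊞ J))
  let e₁ : (kernel v).X₁ ≅ A' :=
    (hV.map_of_exact ShortComplex.π₁).fIsKernel.conePointUniqueUpToIso hI.fIsKernel
  let e₃ : (kernel v).X₃ ≅ C' :=
    (hV.map_of_exact ShortComplex.π₃).fIsKernel.conePointUniqueUpToIso hJ.fIsKernel
  obtain ⟨w, hT⟩ := shortExact_iso_comp_comp_iso (shortExact_kernel_of_epi hB hS v) e₁ e₃
  exact ⟨_, _, _, w, hT, of_shortExact (hV.map_of_exact ShortComplex.π₂)⟩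

end IsInjectiveSyzygy

end InjectiveSyzygy

lemma exists_int_sequence {α : Type*} {r : α → α → Prop} (hnext : ∀ a, ∃ b, r a b)
    (hprev : ∀ b, ∃ a, r a b) (m : ℤ) (a : α) :
    ∃ z : ℤ → α, z m = a ∧ ∀ n, r (z n) (z (n + 1)) := by
  choose s hs using hnext
  choose t ht using hprev
  let z : ℤ → α := fun n => match n with
    | .ofNat k => s^[k] a
    | .negSucc k => t^[k + 1] a
  have hz (n : ℤ) : r (z n) (z (n + 1)) := by
    rcases n with k | _ | k
    · have hk : z (.ofNat k + 1) = s (z (.ofNat k)) := Function.iterate_succ_apply' s k a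
      exact hk ▸ hs _
    · exact ht a
    · have hk : z (.negSucc (k + 1)) = t (z (.negSucc k)) := Function.iterate_succ_apply' t _ a
      exact hk ▸ ht _
  refine ⟨fun n => z (n - m), congrArg z (sub_self m), fun n => ?_⟩
  simpa only [add_sub_right_comm] using hz (n - m)

section GorensteinClass

open scoped ZeroObject

variable {C : Type*} [Category* C] [Abelian C] [HasExt C]

/-- A class `𝒢` of objects which is right `Ext¹`-orthogonal to the test class `𝒯` and in which
every object has both a syzygy and a cosyzygy with respect to injectives. For modules, the
Gorenstein injectives relative to `𝒯` form the largest such class. -/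
structure IsGorensteinClass (𝒯 𝒢 : C → Prop) : Prop where
  subsingleton_ext_one {W A : C} : 𝒯 W → 𝒢 A → Subsingleton (Abelian.Ext W A 1)
  exists_cosyzygy {A : C} : 𝒢 A → ∃ B, 𝒢 B ∧ IsInjectiveSyzygy A B
  exists_syzygy {B : C} : 𝒢 B → ∃ A, 𝒢 A ∧ IsInjectiveSyzygy A B

namespace IsGorensteinClass

variable {𝒯 𝒢 : C → Prop} (h𝒢 : IsGorensteinClass 𝒯 𝒢)
include h𝒢

lemma subsingleton_ext_succ {W A : C} (hW : 𝒯 W) (hA : 𝒢 A) (n : ℕ) :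
    Subsingleton (Abelian.Ext W A (n + 1)) := by
  induction n generalizing A with
  | zero => exact h𝒢.subsingleton_ext_one hW hA
  | succ n ih =>
    obtain ⟨B, hB, I, i, p, w, _, hS⟩ := h𝒢.exists_cosyzygy hA
    exact subsingleton_ext_to_X₁ hS (ih hB) (Abelian.Ext.subsingleton_of_injective W I (n + 1))

lemma subsingleton_ext_succ_of_hasInjectiveDimensionLT [EnoughInjectives C]
    (h𝒯 : ∀ I, Injective I → 𝒯 I) {A : C} (hA : 𝒢 A) (m : ℕ) (V : C)
    [HasInjectiveDimensionLT V (m + 1)] (n : ℕ) : Subsingleton (Abelian.Ext V A (n + 1)) := by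
  induction m generalizing V n with
  | zero =>
    exact h𝒢.subsingleton_ext_succ (h𝒯 V (injective_iff_hasInjectiveDimensionLT_one.2 ‹_›)) hA n
  | succ m ih =>
    obtain ⟨V', I, i, p, w, hI, hS⟩ := IsInjectiveSyzygy.exists_cosyzygy V
    have := (hS.hasInjectiveDimensionLT_X₃_iff m hI).2 ‹_›
    exact subsingleton_ext_from_X₁ hS (h𝒢.subsingleton_ext_succ (h𝒯 I hI) hA n) (ih V' (n + 1))

lemma extensions (h𝒯 : ∀ I, Injective I → 𝒯 I) :
    IsGorensteinClass 𝒯 fun X => ∃ (A B : C) (f : A ⟶ X) (g : X ⟶ B) (w : f ≫ g = 0),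
      (ShortComplex.mk f g w).ShortExact ∧ 𝒢 A ∧ 𝒢 B where
  subsingleton_ext_one hW := fun ⟨_, _, _, _, _, hS, hA, hB⟩ => subsingleton_ext_to_X₂ hS
    (h𝒢.subsingleton_ext_one hW hA) (h𝒢.subsingleton_ext_one hW hB)
  exists_cosyzygy := fun ⟨_, _, _, _, _, hS, hA, hB⟩ =>
    let ⟨A', hA', hAA'⟩ := h𝒢.exists_cosyzygy hA
    let ⟨B', hB', hBB'⟩ := h𝒢.exists_cosyzygy hB
    let ⟨Y, f, g, w, hT, hY⟩ := IsInjectiveSyzygy.exists_shortExact_of_X₁_X₃ hS hAA' hBB'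
    ⟨Y, ⟨A', B', f, g, w, hT, hA', hB'⟩, hY⟩
  exists_syzygy := fun ⟨_, _, _, _, _, hS, hA, hB⟩ =>
    let ⟨A', hA', hAA'⟩ := h𝒢.exists_syzygy hA
    let ⟨B', hB', hBB'⟩ := h𝒢.exists_syzygy hB
    let ⟨Y, f, g, w, hT, hY⟩ := IsInjectiveSyzygy.exists_shortExact_to_X₁_X₃ hS hAA' hBB'
      fun J hJ => h𝒢.subsingleton_ext_one (h𝒯 J hJ) hA
    ⟨Y, ⟨A', B', f, g, w, hT, hA', hB'⟩, hY⟩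

omit h𝒢 in
lemma injective (𝒯 : C → Prop) : IsGorensteinClass 𝒯 (Injective (C := C)) where
  subsingleton_ext_one _ _ := Abelian.Ext.subsingleton_of_injective _ _ _
  exists_cosyzygy {A} _ :=
    ⟨0, inferInstance, A, 𝟙 A, 0, Limits.comp_zero, ‹_›, (ShortComplex.Splitting.ofIsIsoOfIsZero
      _ (inferInstanceAs (IsIso (𝟙 A))) (Limits.isZero_zero C)).shortExact⟩
  exists_syzygy {B} _ :=
    ⟨0, inferInstance, B, 0, 𝟙 B, Limits.zero_comp, ‹_›, (ShortComplex.Splitting.ofIsZeroOfIsIso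
      _ (Limits.isZero_zero C) (inferInstanceAs (IsIso (𝟙 B)))).shortExact⟩

end IsGorensteinClass

end GorensteinClass

section Characterization

variable {𝒯 𝒢 : ModuleCat.{u} R → Prop} {M : ModuleCat.{u} R}

lemma IsGorensteinClass.gorensteinRelInjective (h𝒢 : IsGorensteinClass 𝒯 𝒢) (hM : 𝒢 M) :
    GorensteinRelInjective R 𝒯 M := by
  obtain ⟨Z, hZ₁, hZ⟩ := exists_int_sequence
    (r := fun A B : {A // 𝒢 A} => IsInjectiveSyzygy A.1 B.1)
    (fun A => (h𝒢.exists_cosyzygy A.2).elim fun B hB => ⟨⟨B, hB.1⟩, hB.2⟩)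
    (fun B => (h𝒢.exists_syzygy B.2).elim fun A hA => ⟨⟨A, hA.1⟩, hA.2⟩) 1 ⟨M, hM⟩
  obtain rfl : (Z 1).1 = M := congrArg Subtype.val hZ₁
  choose I i p w hI hS using hZ
  have hex (n : ℤ) : Function.Exact (i n).hom (p n).hom :=
    (ShortComplex.ShortExact.moduleCat_exact_iff_function_exact _).1 (hS n).exact
  have hi (n : ℤ) : Function.Injective (i n).hom := (hS n).moduleCat_injective_f
  have hp (n : ℤ) : Function.Surjective (p n).hom := (hS n).moduleCat_surjective_g
  let d (n : ℤ) : I n →ₗ[R] I (n + 1) := (i (n + 1)).hom ∘ₗ (p n).hom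
  have hdp (n : ℤ) : Function.Exact (d n) (p (n + 1)).hom :=
    (hp n).comp_exact_iff_exact.2 (hex (n + 1))
  have hd (n : ℤ) : Function.Exact (d n) (d (n + 1)) := (hi _).comp_exact_iff_exact.2 (hdp n)
  refine ⟨I, d, (p 0).hom, ⟨fun n => (Module.injective_iff_injective_object R (I n)).2 (hI n), hd,
    fun W hW n g => ⟨fun hg => ?_, ?_⟩⟩, hp 0, hdp (-1)⟩
  · have : Mono (i (n + 1 + 1)) := (hS (n + 1 + 1)).mono_f
    have : Mono (ShortComplex.mk (i (n + 1)) (p (n + 1)) (w (n + 1))).f := (hS (n + 1)).mono_f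
    have hg' : ModuleCat.ofHom g ≫ p (n + 1) = 0 :=
      Limits.zero_of_comp_mono (i (n + 1 + 1)) (ModuleCat.hom_ext hg)
    obtain ⟨v, hv⟩ := exists_lift_of_subsingleton_ext_one (hS n)
      (h𝒢.subsingleton_ext_one hW (Z n).2) ((hS (n + 1)).exact.lift (ModuleCat.ofHom g) hg')
    have hvg : v ≫ p n ≫ i (n + 1) = ModuleCat.ofHom g := by
      rw [reassoc_of% hv]
      exact (hS (n + 1)).exact.lift_f _ _
    exact ⟨v.hom, congrArg ModuleCat.Hom.hom hvg⟩
  · rintro ⟨v, rfl⟩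
    exact LinearMap.ext fun x => (hd n).apply_apply_eq_zero (v x)

lemma shortExact_codRestrict_ker {A B D E : ModuleCat.{u} R} {i : A →ₗ[R] B} {f : B →ₗ[R] D}
    {g : D →ₗ[R] E} (hi : Function.Injective i) (hif : Function.Exact i f)
    (hfg : Function.Exact f g) :
    ∃ w, (ShortComplex.mk (ModuleCat.ofHom i) (ModuleCat.ofHom
      (f.codRestrict (LinearMap.ker g) hfg.apply_apply_eq_zero)) w).ShortExact := by
  refine ⟨ModuleCat.hom_ext (LinearMap.ext fun x => Subtype.ext (hif.apply_apply_eq_zero x)),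
    ModuleCat.shortComplex_shortExact _ ?_ hi ?_⟩
  · rw [LinearMap.exact_iff] at hif
    exact LinearMap.exact_iff.2 ((LinearMap.ker_codRestrict _ _ _).trans hif)
  · rintro ⟨y, hy⟩
    exact ((hfg y).1 hy).imp fun x hx => Subtype.ext hx

lemma isGorensteinClass_ker {I : ℤ → ModuleCat.{u} R} {d : ∀ n, I n →ₗ[R] I (n + 1)}
    (h : IsTotallyAcyclicInjComplex R 𝒯 I d) :
    IsGorensteinClass 𝒯 fun X => ∃ n, Nonempty (ModuleCat.of R (LinearMap.ker (d n)) ≅ X) := by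
  obtain ⟨hI, hd, hT⟩ := h
  have hI' (n : ℤ) : Injective (I n) := (Module.injective_iff_injective_object R (I n)).1 (hI n)
  have hS (n : ℤ) := shortExact_codRestrict_ker (A := .of R (LinearMap.ker (d n)))
    Subtype.val_injective (d n).exact_subtype_ker_map (hd n)
  have hsyz (n : ℤ) : IsInjectiveSyzygy (ModuleCat.of R (LinearMap.ker (d n)))
      (ModuleCat.of R (LinearMap.ker (d (n + 1)))) :=
    let ⟨w, hS⟩ := hS n
    ⟨I n, _, _, w, hI' n, hS⟩
  refine ⟨?_, ?_, ?_⟩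
  · rintro W X hW ⟨n, ⟨e⟩⟩
    obtain ⟨w, hS⟩ := hS n
    have hker : Subsingleton (Abelian.Ext W (ModuleCat.of R (LinearMap.ker (d n))) 1) := by
      have : Injective (I n) := hI' n
      refine subsingleton_ext_one_of_forall_exists_lift hS fun f => ?_
      obtain ⟨v, hv⟩ := (hT W hW n ((LinearMap.ker (d (n + 1))).subtype ∘ₗ f.hom)).1
        (LinearMap.ext fun x => (f.hom x).2)
      exact ⟨ModuleCat.ofHom v,
        ModuleCat.hom_ext (LinearMap.ext fun x => Subtype.ext (LinearMap.congr_fun hv x))⟩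
    have eExt := ((Abelian.extFunctorObj W 1).mapIso e).addCommGroupIsoToAddEquiv
    exact eExt.toEquiv.subsingleton_congr.1 hker
  · rintro X ⟨n, ⟨e⟩⟩
    exact ⟨_, ⟨n + 1, ⟨Iso.refl _⟩⟩, (hsyz n).of_iso e (Iso.refl _)⟩
  · rintro X ⟨n, ⟨e⟩⟩
    obtain ⟨n, rfl⟩ : ∃ m, n = m + 1 := ⟨n - 1, by ring⟩
    exact ⟨_, ⟨n, ⟨Iso.refl _⟩⟩, (hsyz n).of_iso (Iso.refl _) e⟩

lemma GorensteinRelInjective.exists_isGorensteinClass (hM : GorensteinRelInjective R 𝒯 M) :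
    ∃ 𝒢, IsGorensteinClass 𝒯 𝒢 ∧ 𝒢 M := by
  obtain ⟨I, d, π, h, hπ, hdπ⟩ := hM
  have hker : LinearMap.ker (d 0) = LinearMap.ker π :=
    (LinearMap.exact_iff.1 (h.2.1 (-1))).trans (LinearMap.exact_iff.1 hdπ).symm
  let e : LinearMap.ker (d 1) ≃ₗ[R] M :=
    LinearEquiv.ofEq _ _ (LinearMap.exact_iff.1 (h.2.1 0)) ≪≫ₗ (d 0).quotKerEquivRange.symm ≪≫ₗ
      Submodule.quotEquivOfEq _ _ hker ≪≫ₗ π.quotKerEquivOfSurjective hπ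
  exact ⟨_, isGorensteinClass_ker h, 1, ⟨e.toModuleIso⟩⟩

variable (𝒯) in
theorem isGorensteinClass_gorensteinRelInjective :
    IsGorensteinClass 𝒯 (GorensteinRelInjective R 𝒯) where
  subsingleton_ext_one hW hA :=
    let ⟨_, h𝒢, hA⟩ := hA.exists_isGorensteinClass
    h𝒢.subsingleton_ext_one hW hA
  exists_cosyzygy hA :=
    let ⟨_, h𝒢, hA⟩ := hA.exists_isGorensteinClass
    let ⟨B, hB, hAB⟩ := h𝒢.exists_cosyzygy hA
    ⟨B, h𝒢.gorensteinRelInjective hB, hAB⟩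
  exists_syzygy hB :=
    let ⟨_, h𝒢, hB⟩ := hB.exists_isGorensteinClass
    let ⟨A, hA, hAB⟩ := h𝒢.exists_syzygy hB
    ⟨A, h𝒢.gorensteinRelInjective hA, hAB⟩

end Characterization

namespace GorensteinRelInjective

variable {𝒯 : ModuleCat.{u} R → Prop}

lemma of_injective (M : ModuleCat.{u} R) (hM : Injective M) : GorensteinRelInjective R 𝒯 M :=
  (IsGorensteinClass.injective 𝒯).gorensteinRelInjective hM

lemma X₂ (h𝒯 : ∀ I, Injective I → 𝒯 I) {S : ShortComplex (ModuleCat.{u} R)} (hS : S.ShortExact)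
    (h₁ : GorensteinRelInjective R 𝒯 S.X₁) (h₃ : GorensteinRelInjective R 𝒯 S.X₃) :
    GorensteinRelInjective R 𝒯 S.X₂ :=
  ((isGorensteinClass_gorensteinRelInjective 𝒯).extensions h𝒯).gorensteinRelInjective
    ⟨S.X₁, S.X₃, S.f, S.g, S.zero, hS, h₁, h₃⟩

end GorensteinRelInjective

lemma weakInjective_of_injective (M : ModuleCat.{u} R) (hM : Injective M) : WeakInjective R M :=
  have := injective_iff_hasInjectiveDimensionLT_one.1 hM
  WidLE.of_hasInjectiveDimensionLT (n := 0)

lemma GorensteinWeakInjective.injective_of_widLE {G : ModuleCat.{u} R} {k : ℕ}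
    (hG : GorensteinWeakInjective R G) (hk : WidLE R G k) : Injective G := by
  have h𝒢 := isGorensteinClass_gorensteinRelInjective (WeakInjective R)
  induction k generalizing G with
  | zero =>
    obtain ⟨A, hA, I, i, p, w, hI, hS⟩ := h𝒢.exists_syzygy hG
    obtain ⟨s, hs⟩ :=
      exists_lift_of_subsingleton_ext_one hS (h𝒢.subsingleton_ext_one hk hA) (𝟙 G)
    exact Retract.injective ⟨s, p, hs⟩
  | succ k ih =>
    obtain ⟨B, hB, I, i, p, w, hI, hS⟩ := h𝒢.exists_cosyzygy hG
    have hB' : Injective B := ih hB (WidLE.X₃_of_injective hS hk)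
    exact injective_X₁_of_subsingleton_ext_one hS
      (h𝒢.subsingleton_ext_one (weakInjective_of_injective B hB') hG)

/-- `M` has a coresolution of length `n` by modules in `𝒢`. The predicates `GwidLE` and `IdLE` are
definitionally the cases of the Gorenstein weak injective and of the injective modules. -/
def CoresolutionLE (𝒢 : ModuleCat.{u} R → Prop) (M : ModuleCat.{u} R) (n : ℕ) : Prop :=
  ∃ (G : ℕ → ModuleCat.{u} R) (d : ∀ i, G i →ₗ[R] G (i + 1)) (ε : M →ₗ[R] G 0),
    IsFiniteCoresolution R M n G d ε ∧ ∀ i, 𝒢 (G i)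

namespace CoresolutionLE

variable {𝒢 ℋ : ModuleCat.{u} R → Prop} {M : ModuleCat.{u} R} {n : ℕ}

lemma mono (h𝒢ℋ : ∀ X, 𝒢 X → ℋ X) (h : CoresolutionLE 𝒢 M n) : CoresolutionLE ℋ M n :=
  let ⟨G, d, ε, hG, h𝒢⟩ := h
  ⟨G, d, ε, hG, fun i => h𝒢ℋ _ (h𝒢 i)⟩

lemma exists_iso (h : CoresolutionLE 𝒢 M 0) : ∃ X, 𝒢 X ∧ Nonempty (M ≅ X) := by
  obtain ⟨G, d, ε, ⟨hε, hε₀, -, hzero⟩, h𝒢⟩ := h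
  have hbij : Function.Bijective ε := ⟨hε, fun x => (hε₀ x).1 (hzero 1 one_pos _)⟩
  exact ⟨G 0, h𝒢 0, ⟨(LinearEquiv.ofBijective ε hbij).toModuleIso⟩⟩

lemma exists_shortExact (h : CoresolutionLE 𝒢 M (n + 1)) :
    ∃ (X C : ModuleCat.{u} R) (i : M ⟶ X) (p : X ⟶ C) (w : i ≫ p = 0),
      (ShortComplex.mk i p w).ShortExact ∧ 𝒢 X ∧ CoresolutionLE 𝒢 C n := by
  obtain ⟨G, d, ε, ⟨hε, hε₀, hd, hzero⟩, h𝒢⟩ := h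
  obtain ⟨w, hS⟩ := shortExact_codRestrict_ker hε hε₀ (hd 0)
  exact ⟨G 0, _, _, _, w, hS, h𝒢 0, fun i => G (i + 1), fun i => d (i + 1),
    (LinearMap.ker (d 1)).subtype, ⟨Subtype.val_injective, (d 1).exact_subtype_ker_map,
      fun i => hd (i + 1), fun i hi => hzero (i + 1) (Nat.succ_lt_succ hi)⟩, fun i => h𝒢 (i + 1)⟩

lemma of_mem (hM : 𝒢 M) (h₀ : 𝒢 (ModuleCat.of R PUnit.{u + 1})) : CoresolutionLE 𝒢 M 0 := by
  let G : ℕ → ModuleCat.{u} R := fun i => match i with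
    | 0 => M
    | _ + 1 => ModuleCat.of R PUnit.{u + 1}
  have hG (i : ℕ) : ∀ x y : G (i + 1), x = y := fun _ _ => rfl
  refine ⟨G, fun _ => 0, LinearMap.id, ⟨Function.injective_id, fun x => ⟨fun _ => ⟨x, rfl⟩,
    fun _ => rfl⟩, fun i x => ⟨fun _ => ⟨0, hG i _ _⟩, fun _ => rfl⟩, ?_⟩, ?_⟩
  · rintro (_ | i) hi x
    · exact absurd hi (lt_irrefl 0)
    · exact hG i _ _
  · rintro (_ | _)
    · exact hM
    · exact h₀

lemma of_shortExact {S : ShortComplex (ModuleCat.{u} R)} (hS : S.ShortExact) (h₂ : 𝒢 S.X₂)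
    (h₃ : CoresolutionLE 𝒢 S.X₃ n) : CoresolutionLE 𝒢 S.X₁ (n + 1) := by
  obtain ⟨G, d, ε, ⟨hε, hε₀, hd, hzero⟩, h𝒢⟩ := h₃
  let G' : ℕ → ModuleCat.{u} R := fun i => match i with
    | 0 => S.X₂
    | i + 1 => G i
  let d' : ∀ i, G' i →ₗ[R] G' (i + 1) := fun i => match i with
    | 0 => ε ∘ₗ S.g.hom
    | i + 1 => d i
  have hS' := (ShortComplex.ShortExact.moduleCat_exact_iff_function_exact S).1 hS.exact
  refine ⟨G', d', S.f.hom, ⟨hS.moduleCat_injective_f, hε.comp_exact_iff_exact.2 hS', ?_, ?_⟩, ?_⟩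
  · rintro (_ | i)
    · exact hS.moduleCat_surjective_g.comp_exact_iff_exact.2 hε₀
    · exact hd i
  · rintro (_ | i) hi
    · exact absurd hi (Nat.not_lt_zero _)
    · exact hzero i (Nat.lt_of_succ_lt_succ hi)
  · rintro (_ | i)
    · exact h₂
    · exact h𝒢 i

end CoresolutionLE

lemma idLE_iff_coresolutionLE_injective {V : ModuleCat.{u} R} {n : ℕ} :
    IdLE R V n ↔ CoresolutionLE (Injective ·) V n :=
  ⟨CoresolutionLE.mono fun I => (Module.injective_iff_injective_object R I).1,
    CoresolutionLE.mono fun I => (Module.injective_iff_injective_object R I).2⟩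

lemma IdLE.of_hasInjectiveDimensionLT (V : ModuleCat.{u} R) (n : ℕ)
    [HasInjectiveDimensionLT V (n + 1)] : IdLE R V n := by
  rw [idLE_iff_coresolutionLE_injective]
  induction n generalizing V with
  | zero =>
    exact .of_mem (injective_iff_hasInjectiveDimensionLT_one.2 ‹_›)
      (ModuleCat.isZero_of_subsingleton _).injective
  | succ n ih =>
    obtain ⟨V', I, i, p, w, hI, hS⟩ := IsInjectiveSyzygy.exists_cosyzygy V
    have := (hS.hasInjectiveDimensionLT_X₃_iff n hI).2 ‹_›
    exact .of_shortExact hS hI (ih V')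

section Pullback

variable {C : Type*} [Category* C] [Abelian C] {S : ShortComplex C} (hS : S.ShortExact)
include hS

lemma exists_shortExact_of_isPullback_g {P Y : C} {fst : P ⟶ S.X₂} {snd : P ⟶ Y} {c : Y ⟶ S.X₃}
    (sq : IsPullback fst snd S.g c) :
    ∃ (f : S.X₁ ⟶ P) (w : f ≫ snd = 0), (ShortComplex.mk f snd w).ShortExact := by
  have := hS.mono_f
  have := hS.epi_g
  let f : S.X₁ ⟶ P := sq.lift S.f 0 (by simp)
  have hf : f ≫ fst = S.f := sq.lift_fst _ _ _
  have hf₀ : f ≫ snd = 0 := sq.lift_snd _ _ _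
  have hmono : Mono f := have : Mono (f ≫ fst) := hf ▸ ‹Mono S.f›; mono_of_mono f fst
  have hepi : Epi snd := Abelian.epi_snd_of_isLimit _ _ sq.isLimit
  refine ⟨f, hf₀, { exact := ?_, mono_f := hmono, epi_g := hepi }⟩
  refine ShortComplex.exact_of_f_is_kernel _ (Limits.KernelFork.IsLimit.ofι' f hf₀ fun k hk => ?_)
  have hk' : (k ≫ fst) ≫ S.g = 0 := by rw [Category.assoc, sq.w, reassoc_of% hk, Limits.zero_comp]
  refine ⟨hS.exact.lift (k ≫ fst) hk', sq.hom_ext ?_ ?_⟩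
  · rw [Category.assoc, hf, hS.exact.lift_f]
  · rw [Category.assoc, hf₀, Limits.comp_zero, hk]

lemma shortExact_of_isPullback_f {P Y : C} {fst : P ⟶ S.X₁} {snd : P ⟶ Y} {p : Y ⟶ S.X₂} [Epi p]
    (sq : IsPullback fst snd S.f p) : ∃ w, (ShortComplex.mk snd (p ≫ S.g) w).ShortExact := by
  have := hS.mono_f
  have := hS.epi_g
  have hmono : Mono snd := Limits.PullbackCone.mono_snd_of_is_pullback_of_mono sq.isLimit
  have hw : snd ≫ p ≫ S.g = 0 := by rw [← sq.w_assoc, S.zero, Limits.comp_zero]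
  refine ⟨hw, { exact := ?_, mono_f := hmono, epi_g := epi_comp p S.g }⟩
  refine ShortComplex.exact_of_f_is_kernel _ (Limits.KernelFork.IsLimit.ofι' snd hw fun k hk => ?_)
  have hk' : (k ≫ p) ≫ S.g = 0 := by rw [Category.assoc, hk]
  exact ⟨sq.lift (hS.exact.lift (k ≫ p) hk') k (hS.exact.lift_f _ _), sq.lift_snd _ _ _⟩

omit hS in
lemma exists_shortExact_of_isInjectiveSyzygy {M X B G V Z : C} {i : M ⟶ X} {p : X ⟶ B}
    {φ : B ⟶ G} {ψ : G ⟶ V} {w : i ≫ p = 0} {w' : φ ≫ ψ = 0}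
    (hX : (ShortComplex.mk i p w).ShortExact) (hG : (ShortComplex.mk φ ψ w').ShortExact)
    (hZ : IsInjectiveSyzygy Z G) :
    ∃ (Y U : C) (a : M ⟶ Y) (b : Y ⟶ U) (e : Z ⟶ Y) (c : Y ⟶ X) (w : a ≫ b = 0) (w' : e ≫ c = 0),
      (ShortComplex.mk a b w).ShortExact ∧ (ShortComplex.mk e c w').ShortExact ∧
        IsInjectiveSyzygy U V := by
  obtain ⟨I, j, q, wI, hI, hIS⟩ := hZ
  have : Epi q := hIS.epi_g
  have sqU := IsPullback.of_hasPullback φ q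
  have sqY := IsPullback.of_hasPullback p (Limits.pullback.fst φ q)
  obtain ⟨a, wa, hM⟩ := exists_shortExact_of_isPullback_g hX sqY
  obtain ⟨e, we, hY⟩ := exists_shortExact_of_isPullback_g hIS (sqY.paste_vert sqU).flip
  obtain ⟨wU, hU⟩ := shortExact_of_isPullback_f hG sqU
  exact ⟨_, _, a, _, e, _, wa, we, hM, hY, I, _, _, wU, hI, hU⟩

end Pullback

lemma CoresolutionLE.exists_embedding {𝒯 : ModuleCat.{u} R → Prop}
    (h𝒯 : ∀ I, Injective I → 𝒯 I) {M : ModuleCat.{u} R} {n : ℕ}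
    (h : CoresolutionLE (GorensteinRelInjective R 𝒯) M n) :
    ∃ (G V : ModuleCat.{u} R) (φ : M ⟶ G) (ψ : G ⟶ V) (w : φ ≫ ψ = 0),
      (ShortComplex.mk φ ψ w).ShortExact ∧ GorensteinRelInjective R 𝒯 G ∧
        HasInjectiveDimensionLT V n := by
  induction n generalizing M with
  | zero =>
    obtain ⟨X, hX, ⟨e⟩⟩ := h.exists_iso
    refine ⟨X, .of R PUnit, e.hom, 0, Limits.comp_zero, ?_, hX, ?_⟩
    · exact (ShortComplex.Splitting.ofIsIsoOfIsZero _ (inferInstanceAs (IsIso e.hom))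
        (ModuleCat.isZero_of_subsingleton _)).shortExact
    · exact (hasInjectiveDimensionLT_zero_iff_isZero _).2 (ModuleCat.isZero_of_subsingleton _)
  | succ n ih =>
    obtain ⟨X, B, i, p, _, hXS, hX, hB⟩ := h.exists_shortExact
    obtain ⟨G, V, φ, ψ, _, hGS, hG, hV⟩ := ih hB
    obtain ⟨Z, hZ, hZG⟩ := (isGorensteinClass_gorensteinRelInjective 𝒯).exists_syzygy hG
    obtain ⟨Y, U, a, b, e, c, w, _, hY, hYX, I, _, _, _, hI, hU⟩ :=
      exists_shortExact_of_isInjectiveSyzygy hXS hGS hZG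
    have : HasInjectiveDimensionLT I (n + 1) := hasInjectiveDimensionLT_of_ge I 1 _ (by lia)
    exact ⟨Y, U, a, b, w, hY, .X₂ h𝒯 hYX hZ hX, hU.hasInjectiveDimensionLT_X₁ n hV this⟩

lemma gwid_eq_coe {M : ModuleCat.{u} R} {n : ℕ} (h : Gwid R M = n) :
    GwidLE R M n ∧ ∀ m, GwidLE R M m → n ≤ m := by
  have hmin (m : ℕ) (hm : GwidLE R M m) : n ≤ m := by
    have : Gwid R M ≤ m := sInf_le ⟨m, rfl, hm⟩
    exact_mod_cast h ▸ this
  have hne : {c : ℕ∞ | ∃ n : ℕ, c = n ∧ GwidLE R M n}.Nonempty := by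
    by_contra! hempty
    rw [Gwid, hempty, sInf_empty] at h
    exact ENat.natCast_ne_top n h.symm
  obtain ⟨m, hm, hM⟩ := csInf_mem hne
  obtain rfl : n = m := by exact_mod_cast h.symm.trans hm
  exact ⟨hM, hmin⟩

lemma hasInjectiveDimensionLT_quotient_range {S : ShortComplex (ModuleCat.{u} R)}
    (hS : S.ShortExact) (n : ℕ) [HasInjectiveDimensionLT S.X₃ n] :
    HasInjectiveDimensionLT (ModuleCat.of R (S.X₂ ⧸ LinearMap.range S.f.hom)) n :=
  let e : S.X₃ ≅ ModuleCat.of R (S.X₂ ⧸ LinearMap.range S.f.hom) :=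
    hS.gIsCokernel.coconePointUniqueUpToIso (ModuleCat.cokernelIsColimit S.f)
  hasInjectiveDimensionLT_of_iso e n

lemma gwiPreenvelope_of_shortExact {S : ShortComplex (ModuleCat.{u} R)} (hS : S.ShortExact)
    (hG : GorensteinWeakInjective R S.X₂) (n : ℕ) [HasInjectiveDimensionLT S.X₃ (n + 1)] :
    GWIPreenvelope R S.X₁ S.X₂ S.f.hom := by
  refine ⟨hG, fun G' hG' f => ?_⟩
  have hext : Subsingleton (Abelian.Ext S.X₃ G' 1) :=
    (isGorensteinClass_gorensteinRelInjective _).subsingleton_ext_succ_of_hasInjectiveDimensionLT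
      weakInjective_of_injective hG' n S.X₃ 0
  obtain ⟨g, hg⟩ := exists_extension_of_subsingleton_ext_one hS hext (ModuleCat.ofHom f)
  exact ⟨g.hom, congrArg ModuleCat.Hom.hom hg⟩

lemma idim_quotient_range_eq {M G : ModuleCat.{u} R} {φ : M →ₗ[R] G} {n : ℕ}
    (hφ : Function.Injective φ) (hG : GorensteinWeakInjective R G)
    [HasInjectiveDimensionLT (ModuleCat.of R (G ⧸ LinearMap.range φ)) (n + 1)]
    (hM : ∀ m, GwidLE R M m → n + 1 ≤ m) :
    Idim R (ModuleCat.of R (G ⧸ LinearMap.range φ)) = n := by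
  refine le_antisymm (sInf_le ⟨n, rfl, .of_hasInjectiveDimensionLT _ n⟩) (le_sInf ?_)
  rintro _ ⟨k, rfl, hk⟩
  have : Mono (ModuleCat.ofHom φ) := (ModuleCat.mono_iff_injective _).2 hφ
  have hk' : CoresolutionLE (GorensteinWeakInjective R) _ k :=
    (idLE_iff_coresolutionLE_injective.1 hk).mono GorensteinRelInjective.of_injective
  have hS : (ShortComplex.mk (ModuleCat.ofHom φ) (ModuleCat.ofHom (LinearMap.range φ).mkQ)
    (ModuleCat.hom_ext (LinearMap.range_mkQ_comp φ))).ShortExact :=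
    { exact := ShortComplex.exact_of_g_is_cokernel _ (ModuleCat.cokernelIsColimit _)
      mono_f := this
      epi_g := (ModuleCat.epi_iff_surjective _).2 (Submodule.mkQ_surjective _) }
  exact_mod_cast Nat.succ_le_succ_iff.1 (hM _ (CoresolutionLE.of_shortExact hS hG hk'))

end

/-- A module of finite Gorenstein weak injective dimension `n` admits a monomorphic
Gorenstein weak injective preenvelope whose cokernel has injective dimension `n - 1`
(it is zero when `n = 0`); moreover the preenvelope is injective when `wid_R M < ∞`. -/
theorem exists_gorensteinWeakInjective_preenvelope (M : ModuleCat.{u} R) (n : ℕ)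
    (h : Gwid R M = (n : ℕ∞)) :
    ∃ (G : ModuleCat.{u} R) (φ : M →ₗ[R] G), Function.Injective φ ∧
      GWIPreenvelope R M G φ ∧
      (n = 0 → Function.Surjective φ) ∧
      (n ≠ 0 → Idim R (ModuleCat.of R (↥G ⧸ LinearMap.range φ)) = ((n - 1 : ℕ) : ℕ∞)) ∧
      ((∃ k : ℕ, WidLE R M k) → Module.Injective R G) := by
  obtain ⟨hM, hmin⟩ := gwid_eq_coe h
  obtain ⟨G, V, φ, ψ, w, hS, hG, hV⟩ :=
    CoresolutionLE.exists_embedding weakInjective_of_injective hM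
  have hV' : HasInjectiveDimensionLT V (n + 1) := hasInjectiveDimensionLT_of_ge V n _ n.le_succ
  refine ⟨G, φ.hom, hS.moduleCat_injective_f, gwiPreenvelope_of_shortExact hS hG n, ?_, ?_, ?_⟩
  · rintro rfl
    have : IsIso φ := hS.isIso_f_iff.2 ((hasInjectiveDimensionLT_zero_iff_isZero V).1 hV)
    exact (ModuleCat.epi_iff_surjective φ).1 inferInstance
  · intro hn
    obtain ⟨m, rfl⟩ := Nat.exists_eq_succ_of_ne_zero hn
    have := hasInjectiveDimensionLT_quotient_range hS (m + 1)
    exact idim_quotient_range_eq (n := m) hS.moduleCat_injective_f hG hmin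
  · rintro ⟨k, hk⟩
    have hGwidLE : WidLE R G (max k n) := WidLE.X₂ hS (hk.mono (le_max_left k n))
      ((WidLE.of_hasInjectiveDimensionLT (M := V)).mono (le_max_right k n))
    exact (Module.injective_iff_injective_object R G).2
      (GorensteinWeakInjective.injective_of_widLE hG hGwidLE)
end

section
/- Let 0 → L → M → N → 0 be exact with M and N Gorenstein weak injective. Then the following are equivalent: (1) L is Gorenstein weak injective; (2) Ext^1_R(I, L) = 0 for every injective module I; (3) Ext^1_R(W, L) = 0 for every weak injective module W. -/
open CategoryTheory

universe u

variable (R : Type u) [Ring R]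

/-!
A module `M` is Gorenstein injective relative to `𝒯` exactly when it sits in a doubly infinite
chain of short exact sequences `0 → Z n → I n → Z (n + 1) → 0` with `I n` injective and
`Ext¹(𝒯, Z n) = 0`. By coinduction, a class of modules in `𝒯^⊥` all of whose members continue
such a chain inside the class, in both directions, consists of Gorenstein injective modules; the
horseshoe lemma then gives closure under extensions.

For `0 → L → M → N → 0`, choose `0 → K → E → N → 0` with `E` injective and `K` Gorenstein injective.
The pullback `D = M ×_N E` is an extension of `M` by `K`, hence Gorenstein injective, and
`0 → L → D → E → 0` splits because `Ext¹(E, L) = 0`. So `L` inherits from `D` both the vanishing of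
`Ext¹(𝒯, L)` and a presentation `0 → K' → I' → L → 0`, where `I'` is a direct summand of an
injective module. On the other side, embed `M` in an injective `J` with Gorenstein injective
cokernel; then `J / L` is an extension of `J / M` by `N`.
-/

section

variable {R}

theorem exists_desc_of_exact {A B C X : Type*} [AddCommGroup A] [AddCommGroup B] [AddCommGroup C]
    [AddCommGroup X] [Module R A] [Module R B] [Module R C] [Module R X] {f : A →ₗ[R] B}
    {p : B →ₗ[R] C} (hfp : Function.Exact f p) (hp : Function.Surjective p) (h : B →ₗ[R] X)
    (hf : ∀ a, h (f a) = 0) : ∃ k : C →ₗ[R] X, ∀ b, k (p b) = h b :=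
  ⟨f.range.liftQ h (LinearMap.range_le_ker_iff.2 (LinearMap.ext hf)) ∘ₗ
    (hfp.linearEquivOfSurjective hp).symm.toLinearMap, fun b => by simp⟩

theorem exists_lift_of_exact {A B C X : Type*} [AddCommGroup A] [AddCommGroup B] [AddCommGroup C]
    [AddCommGroup X] [Module R A] [Module R B] [Module R C] [Module R X] {i : A →ₗ[R] B}
    {g : B →ₗ[R] C} (hi : Function.Injective i) (hig : Function.Exact i g) (h : X →ₗ[R] B)
    (hg : ∀ x, g (h x) = 0) : ∃ k : X →ₗ[R] A, ∀ x, i (k x) = h x :=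
  ⟨(LinearEquiv.ofInjective i hi).symm.toLinearMap ∘ₗ
    h.codRestrict i.range fun x => (hig _).1 (hg x), fun _ =>
      congrArg Subtype.val ((LinearEquiv.ofInjective i hi).apply_symm_apply _)⟩

theorem shortExactSeq_ker {B C : ModuleCat.{u} R} {g : B →ₗ[R] C} (hg : Function.Surjective g) :
    ShortExactSeq R (ModuleCat.of R g.ker) B C g.ker.subtype g :=
  ⟨Submodule.injective_subtype _, hg, LinearMap.exact_subtype_ker_map g⟩

theorem shortExactSeq_mkQ_range {A B : ModuleCat.{u} R} {f : A →ₗ[R] B}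
    (hf : Function.Injective f) :
    ShortExactSeq R A B (ModuleCat.of R (B ⧸ f.range)) f f.range.mkQ :=
  ⟨hf, Submodule.mkQ_surjective _, LinearMap.exact_map_mkQ_range f⟩

theorem shortExactSeq_inl_snd (A B : ModuleCat.{u} R) :
    ShortExactSeq R A (ModuleCat.of R (A × B)) B (LinearMap.inl R A B) (LinearMap.snd R A B) :=
  ⟨LinearMap.inl_injective, LinearMap.snd_surjective, Function.Exact.inl_snd⟩

theorem shortExactSeq_inr_fst (A B : ModuleCat.{u} R) :
    ShortExactSeq R B (ModuleCat.of R (A × B)) A (LinearMap.inr R A B) (LinearMap.fst R A B) :=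
  ⟨LinearMap.inr_injective, LinearMap.fst_surjective, Function.Exact.inr_fst⟩

theorem shortExactSeq_id_zero (A : ModuleCat.{u} R) :
    ShortExactSeq R A A (ModuleCat.of R PUnit) LinearMap.id 0 :=
  ⟨Function.injective_id, fun _ => ⟨0, rfl⟩, fun x => ⟨fun _ => ⟨x, rfl⟩, fun _ => rfl⟩⟩

theorem shortExactSeq_zero_id (A : ModuleCat.{u} R) :
    ShortExactSeq R (ModuleCat.of R PUnit) A A 0 LinearMap.id :=
  ⟨fun _ _ _ => rfl, Function.surjective_id,
    fun _ => ⟨fun h => ⟨0, h.symm⟩, fun ⟨_, h⟩ => h.symm⟩⟩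

section NineLemma

variable {X₁ Y₁ Z₁ X₂ Y₂ Z₂ X₃ Y₃ Z₃ : ModuleCat.{u} R}
  {a : X₁ →ₗ[R] X₂} {a' : X₂ →ₗ[R] X₃} {b : Y₁ →ₗ[R] Y₂} {b' : Y₂ →ₗ[R] Y₃}
  {c : Z₁ →ₗ[R] Z₂} {c' : Z₂ →ₗ[R] Z₃}

theorem ShortExactSeq.exists_top_of_nine {f₂ : X₂ →ₗ[R] Y₂} {g₂ : Y₂ →ₗ[R] Z₂}
    {f₃ : X₃ →ₗ[R] Y₃} {g₃ : Y₃ →ₗ[R] Z₃} (hX : ShortExactSeq R X₁ X₂ X₃ a a')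
    (hY : ShortExactSeq R Y₁ Y₂ Y₃ b b') (hZ : ShortExactSeq R Z₁ Z₂ Z₃ c c')
    (h₂ : ShortExactSeq R X₂ Y₂ Z₂ f₂ g₂) (h₃ : ShortExactSeq R X₃ Y₃ Z₃ f₃ g₃)
    (hf : ∀ x, b' (f₂ x) = f₃ (a' x)) (hg : ∀ y, c' (g₂ y) = g₃ (b' y)) :
    ∃ f₁ g₁, ShortExactSeq R X₁ Y₁ Z₁ f₁ g₁ := by
  obtain ⟨ha, ha', haa'⟩ := hX
  obtain ⟨hb, -, hbb'⟩ := hY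
  obtain ⟨hc, -, hcc'⟩ := hZ
  obtain ⟨hf₂, hg₂, hfg₂⟩ := h₂
  obtain ⟨hf₃, -, hfg₃⟩ := h₃
  obtain ⟨f₁, hf₁⟩ := exists_lift_of_exact hb hbb' (f₂ ∘ₗ a) fun x => by
    simp [hf, haa'.apply_apply_eq_zero]
  obtain ⟨g₁, hg₁⟩ := exists_lift_of_exact hc hcc' (g₂ ∘ₗ b) fun y => by
    simp [hg, hbb'.apply_apply_eq_zero]
  simp only [LinearMap.comp_apply] at hf₁ hg₁
  refine ⟨f₁, g₁, fun x x' hxx' => ha (hf₂ (by rw [← hf₁, ← hf₁, hxx'])), fun z => ?_,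
    fun y => ⟨fun hy => ?_, ?_⟩⟩
  · obtain ⟨y, hy⟩ := hg₂ (c z)
    obtain ⟨x, hx⟩ := (hfg₃ _).1 (by rw [← hg, hy, hcc'.apply_apply_eq_zero] : g₃ (b' y) = 0)
    obtain ⟨x, rfl⟩ := ha' x
    obtain ⟨y', hy'⟩ := (hbb' (y - f₂ x)).1 (by rw [map_sub, hf, hx, sub_self])
    exact ⟨y', hc (by simp [hg₁, hy', hy, hfg₂.apply_apply_eq_zero])⟩
  · obtain ⟨x, hx⟩ := (hfg₂ (b y)).1 (by rw [← hg₁, hy, map_zero])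
    obtain ⟨x, rfl⟩ := (haa' x).1
      (hf₃ (by rw [← hf, hx, hbb'.apply_apply_eq_zero, map_zero]))
    exact ⟨x, hb (by rw [hf₁, hx])⟩
  · rintro ⟨x, rfl⟩
    exact hc (by rw [hg₁, hf₁, hfg₂.apply_apply_eq_zero, map_zero])

theorem ShortExactSeq.exists_bottom_of_nine {f₁ : X₁ →ₗ[R] Y₁} {g₁ : Y₁ →ₗ[R] Z₁}
    {f₂ : X₂ →ₗ[R] Y₂} {g₂ : Y₂ →ₗ[R] Z₂} (hX : ShortExactSeq R X₁ X₂ X₃ a a')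
    (hY : ShortExactSeq R Y₁ Y₂ Y₃ b b') (hZ : ShortExactSeq R Z₁ Z₂ Z₃ c c')
    (h₁ : ShortExactSeq R X₁ Y₁ Z₁ f₁ g₁) (h₂ : ShortExactSeq R X₂ Y₂ Z₂ f₂ g₂)
    (hf : ∀ x, b (f₁ x) = f₂ (a x)) (hg : ∀ y, c (g₁ y) = g₂ (b y)) :
    ∃ f₃ g₃, ShortExactSeq R X₃ Y₃ Z₃ f₃ g₃ := by
  obtain ⟨-, ha', haa'⟩ := hX
  obtain ⟨-, hb', hbb'⟩ := hY
  obtain ⟨hc, hc', hcc'⟩ := hZ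
  obtain ⟨-, hg₁, hfg₁⟩ := h₁
  obtain ⟨hf₂, hg₂, hfg₂⟩ := h₂
  obtain ⟨f₃, hf₃⟩ := exists_desc_of_exact haa' ha' (b' ∘ₗ f₂) fun x => by
    simp [← hf, hbb'.apply_apply_eq_zero]
  obtain ⟨g₃, hg₃⟩ := exists_desc_of_exact hbb' hb' (c' ∘ₗ g₂) fun y => by
    simp [← hg, hcc'.apply_apply_eq_zero]
  simp only [LinearMap.comp_apply] at hf₃ hg₃
  refine ⟨f₃, g₃, (injective_iff_map_eq_zero _).2 fun x hx => ?_, fun z => ?_,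
    fun y => ⟨fun hy => ?_, ?_⟩⟩
  · obtain ⟨x, rfl⟩ := ha' x
    obtain ⟨y, hy⟩ := (hbb' (f₂ x)).1 (by rw [← hf₃, hx])
    obtain ⟨x', rfl⟩ := (hfg₁ y).1
      (hc (by rw [hg, hy, hfg₂.apply_apply_eq_zero, map_zero]))
    rw [← hf₂ ((hf x').symm.trans hy), haa'.apply_apply_eq_zero]
  · obtain ⟨z, rfl⟩ := hc' z
    obtain ⟨y, rfl⟩ := hg₂ z
    exact ⟨b' y, hg₃ y⟩
  · obtain ⟨y, rfl⟩ := hb' y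
    obtain ⟨z, hz⟩ := (hcc' (g₂ y)).1 (by rw [← hg₃, hy])
    obtain ⟨y', rfl⟩ := hg₁ z
    obtain ⟨x, hx⟩ := (hfg₂ (y - b y')).1 (by rw [map_sub, ← hg, hz, sub_self])
    exact ⟨a' x, by rw [hf₃, hx, map_sub, hbb'.apply_apply_eq_zero, sub_zero]⟩
  · rintro ⟨x, rfl⟩
    obtain ⟨x, rfl⟩ := ha' x
    rw [hf₃, hg₃, hfg₂.apply_apply_eq_zero, map_zero]

end NineLemma

theorem ShortExactSeq.exists_preimage {K I D L E : ModuleCat.{u} R} {κ : K →ₗ[R] I}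
    {p : I →ₗ[R] D} {l : L →ₗ[R] D} {ρ : D →ₗ[R] E} (hI : ShortExactSeq R K I D κ p)
    (hD : ShortExactSeq R L D E l ρ) :
    ∃ (I' : ModuleCat.{u} R) (κ' : K →ₗ[R] I') (p' : I' →ₗ[R] L) (j : I' →ₗ[R] I)
      (q : I →ₗ[R] E), ShortExactSeq R K I' L κ' p' ∧ ShortExactSeq R I' I E j q := by
  have hker := shortExactSeq_ker (g := ρ ∘ₗ p) (hD.2.1.comp hI.2.1)
  obtain ⟨κ', p', h⟩ := exists_top_of_nine (shortExactSeq_id_zero K) hker hD hI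
    (shortExactSeq_zero_id E) (fun x => by simp [hI.2.2.apply_apply_eq_zero]) fun _ => rfl
  exact ⟨_, κ', p', _, _, h, hker⟩

theorem ShortExactSeq.exists_quotient {L M N J B : ModuleCat.{u} R} {f : L →ₗ[R] M}
    {g : M →ₗ[R] N} {j : M →ₗ[R] J} {q : J →ₗ[R] B} (hM : ShortExactSeq R L M N f g)
    (hJ : ShortExactSeq R M J B j q) :
    ∃ (C : ModuleCat.{u} R) (i : L →ₗ[R] J) (π : J →ₗ[R] C) (a : N →ₗ[R] C) (b : C →ₗ[R] B),
      ShortExactSeq R L J C i π ∧ ShortExactSeq R N C B a b := by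
  have hcoker := shortExactSeq_mkQ_range (f := j ∘ₗ f) (hJ.1.comp hM.1)
  obtain ⟨a, b, h⟩ := exists_bottom_of_nine hM hcoker (shortExactSeq_zero_id B)
    (shortExactSeq_id_zero L) hJ (fun _ => rfl) fun x => by simp [hJ.2.2.apply_apply_eq_zero]
  exact ⟨_, _, _, a, b, hcoker, h⟩

theorem ShortExactSeq.exists_pullback {L M N K E : ModuleCat.{u} R} {f : L →ₗ[R] M}
    {g : M →ₗ[R] N} {i : K →ₗ[R] E} {p : E →ₗ[R] N} (hM : ShortExactSeq R L M N f g)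
    (hE : ShortExactSeq R K E N i p) :
    ∃ (D : ModuleCat.{u} R) (a : K →ₗ[R] D) (b : D →ₗ[R] M) (l : L →ₗ[R] D) (ρ : D →ₗ[R] E),
      ShortExactSeq R K D M a b ∧ ShortExactSeq R L D E l ρ := by
  have hker := shortExactSeq_ker (B := ModuleCat.of R (M × E)) (g := g.coprod p) fun n =>
    (hM.2.1 n).imp' (·, 0) fun m hm => by simp [hm]
  obtain ⟨a, b, hKDM⟩ := exists_top_of_nine hE hker (shortExactSeq_id_zero M)
    (shortExactSeq_inr_fst M E) (shortExactSeq_id_zero N) (fun e => by simp) fun _ => rfl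
  obtain ⟨l, ρ, hLDE⟩ := exists_top_of_nine hM hker (shortExactSeq_id_zero E)
    (shortExactSeq_inl_snd M E) (shortExactSeq_id_zero N) (fun m => by simp) fun _ => rfl
  exact ⟨_, a, b, l, ρ, hKDM, hLDE⟩

theorem ShortExactSeq.horseshoe_left {A D B A' I B' J : ModuleCat.{u} R} {a : A →ₗ[R] D}
    {b : D →ₗ[R] B} {i : A' →ₗ[R] I} {p : I →ₗ[R] A} {j : B' →ₗ[R] J} {q : J →ₗ[R] B}
    (hD : ShortExactSeq R A D B a b) (hA : ShortExactSeq R A' I A i p)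
    (hB : ShortExactSeq R B' J B j q) {σ : J →ₗ[R] D} (hσ : ∀ y, b (σ y) = q y) :
    ∃ (D' : ModuleCat.{u} R) (a' : A' →ₗ[R] D') (b' : D' →ₗ[R] B')
      (k : D' →ₗ[R] ModuleCat.of R (I × J)) (r : ModuleCat.of R (I × J) →ₗ[R] D),
      ShortExactSeq R A' D' B' a' b' ∧ ShortExactSeq R D' (ModuleCat.of R (I × J)) D k r := by
  let r : ModuleCat.of R (I × J) →ₗ[R] D := (a ∘ₗ p).coprod σ
  have hr : Function.Surjective r := fun d => by
    obtain ⟨y, hy⟩ := hB.2.1 (b d)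
    obtain ⟨n, hn⟩ := (hD.2.2 (d - σ y)).1 (by rw [map_sub, hσ, hy, sub_self])
    obtain ⟨x, rfl⟩ := hA.2.1 n
    exact ⟨(x, y), by simp [r, hn]⟩
  obtain ⟨a', b', h⟩ := exists_top_of_nine hA (shortExactSeq_ker hr) hB
    (shortExactSeq_inl_snd I J) hD (fun x => by simp [r])
    fun z => by simp [r, hσ, hD.2.2.apply_apply_eq_zero]
  exact ⟨_, a', b', _, r, h, shortExactSeq_ker hr⟩

theorem ShortExactSeq.horseshoe_right {A D B A' I B' J : ModuleCat.{u} R} {a : A →ₗ[R] D}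
    {b : D →ₗ[R] B} {i : A →ₗ[R] I} {p : I →ₗ[R] A'} {j : B →ₗ[R] J} {q : J →ₗ[R] B'}
    (hD : ShortExactSeq R A D B a b) (hA : ShortExactSeq R A I A' i p)
    (hB : ShortExactSeq R B J B' j q) {φ : D →ₗ[R] I} (hφ : ∀ x, φ (a x) = i x) :
    ∃ (D' : ModuleCat.{u} R) (a' : A' →ₗ[R] D') (b' : D' →ₗ[R] B')
      (k : D →ₗ[R] ModuleCat.of R (I × J)) (r : ModuleCat.of R (I × J) →ₗ[R] D'),
      ShortExactSeq R A' D' B' a' b' ∧ ShortExactSeq R D (ModuleCat.of R (I × J)) D' k r := by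
  let k : D →ₗ[R] ModuleCat.of R (I × J) := φ.prod (j ∘ₗ b)
  have hk : Function.Injective k := (injective_iff_map_eq_zero _).2 fun d hd => by
    obtain ⟨hφd, hbd⟩ : φ d = 0 ∧ j (b d) = 0 := Prod.ext_iff.1 hd
    obtain ⟨x, rfl⟩ := (hD.2.2 d).1 (hB.1 (hbd.trans (map_zero j).symm))
    rw [hA.1 ((hφ x).symm.trans (hφd.trans (map_zero i).symm)), map_zero]
  obtain ⟨a', b', h⟩ := exists_bottom_of_nine hA (shortExactSeq_mkQ_range hk) hB hD
    (shortExactSeq_inl_snd I J)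
    (fun x => Prod.ext (hφ x) (by simp [k, hD.2.2.apply_apply_eq_zero])) fun _ => rfl
  exact ⟨_, a', b', k, _, h, shortExactSeq_mkQ_range hk⟩

theorem extVanish_one_iff_of_projectiveResolution {W : ModuleCat.{u} R}
    (P : ProjectiveResolution W) (L : ModuleCat.{u} R) :
    ExtVanish R 1 W L ↔ ∀ z : P.complex.X 1 →ₗ[R] L,
      (∀ x, z ((P.complex.d 2 1).hom x) = 0) →
      ∃ t : P.complex.X 0 →ₗ[R] L, ∀ x, t ((P.complex.d 1 0).hom x) = z x := by
  have exactAt_iff : ExtVanish R 1 W L ↔ (P.complex.linearYonedaObj ℤ L).ExactAt 1 := by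
    rw [HomologicalComplex.exactAt_iff_isZero_homology, ← (P.isoExt (R := ℤ) 1 L).isZero_iff]
    exact ModuleCat.isZero_iff_subsingleton.symm
  rw [exactAt_iff, HomologicalComplex.exactAt_iff' _ 0 1 2 (by simp) (by simp),
    ShortComplex.moduleCat_exact_iff]
  constructor
  · intro h z hz
    obtain ⟨t, ht⟩ := h (ModuleCat.ofHom z)
      (show P.complex.d 2 1 ≫ ModuleCat.ofHom z = 0 from ModuleCat.hom_ext (LinearMap.ext hz))
    have ht' : P.complex.d 1 0 ≫ t = ModuleCat.ofHom z := ht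
    exact ⟨t.hom, fun x => congr($(ht').hom x)⟩
  · intro h z hz
    have hz' : P.complex.d 2 1 ≫ (z : P.complex.X 1 ⟶ L) = 0 := hz
    obtain ⟨t, ht⟩ := h (ModuleCat.Hom.hom (z : P.complex.X 1 ⟶ L))
      fun x => congr($(hz').hom x)
    exact ⟨(ModuleCat.ofHom t : P.complex.X 0 ⟶ L), ModuleCat.hom_ext (LinearMap.ext ht)⟩

theorem exists_projective_forall_extVanish_one_iff (W : ModuleCat.{u} R) :
    ∃ (P : ModuleCat.{u} R) (ε : P →ₗ[R] W), Module.Projective R P ∧ Function.Surjective ε ∧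
      ∀ L : ModuleCat.{u} R, ExtVanish R 1 W L ↔
        ∀ φ : ε.ker →ₗ[R] L, ∃ ψ : P →ₗ[R] L, ∀ x : ε.ker, ψ x = φ x := by
  let P := projectiveResolution W
  have hε : Function.Exact (P.complex.d 1 0).hom (P.π.f 0).hom :=
    (ShortComplex.ShortExact.moduleCat_exact_iff_function_exact _).1 P.exact₀
  have hd : Function.Exact (P.complex.d 2 1).hom (P.complex.d 1 0).hom :=
    (ShortComplex.ShortExact.moduleCat_exact_iff_function_exact _).1 (P.exact_succ 0)
  refine ⟨P.complex.X 0, (P.π.f 0).hom, (IsProjective.iff_projective _).2 (P.projective 0),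
    (ModuleCat.epi_iff_surjective (P.π.f 0)).1 inferInstance, fun L => ?_⟩
  let δ := (P.complex.d 1 0).hom.codRestrict (P.π.f 0).hom.ker hε.apply_apply_eq_zero
  have h_surj : Function.Surjective δ := fun x =>
    ((hε _).1 x.2).imp fun _ hy => Subtype.ext hy
  have h_exact : Function.Exact (P.complex.d 2 1).hom δ := fun x =>
    Subtype.ext_iff.trans (hd x)
  rw [extVanish_one_iff_of_projectiveResolution P L]
  constructor
  · intro h φ
    obtain ⟨ψ, hψ⟩ := h (φ ∘ₗ δ) fun x =>
      (congrArg φ (h_exact.apply_apply_eq_zero x)).trans (map_zero φ)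
    refine ⟨ψ, fun x => ?_⟩
    obtain ⟨y, rfl⟩ := h_surj x
    exact hψ y
  · intro h z hz
    obtain ⟨φ, hφ⟩ := exists_desc_of_exact h_exact h_surj z hz
    obtain ⟨ψ, hψ⟩ := h φ
    exact ⟨ψ, fun x => (hψ (δ x)).trans (hφ x)⟩

theorem extVanish_one_of_injective (W : ModuleCat.{u} R) {L : ModuleCat.{u} R}
    (hL : Module.Injective R L) : ExtVanish R 1 W L := by
  obtain ⟨P, ε, -, -, hExt⟩ := exists_projective_forall_extVanish_one_iff W
  exact (hExt L).2 (hL.out ε.ker.subtype (Submodule.injective_subtype _))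

theorem ExtVanish.of_retract {W L D : ModuleCat.{u} R} (hD : ExtVanish R 1 W D) {s : L →ₗ[R] D}
    {r : D →ₗ[R] L} (hrs : ∀ x, r (s x) = x) : ExtVanish R 1 W L := by
  obtain ⟨P, ε, -, -, hExt⟩ := exists_projective_forall_extVanish_one_iff W
  refine (hExt L).2 fun φ => ?_
  obtain ⟨ψ, hψ⟩ := (hExt D).1 hD (s ∘ₗ φ)
  exact ⟨r ∘ₗ ψ, fun x => by simp [hψ, hrs]⟩

theorem ExtVanish.of_shortExactSeq {W A D B : ModuleCat.{u} R} {a : A →ₗ[R] D} {b : D →ₗ[R] B}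
    (hs : ShortExactSeq R A D B a b) (hA : ExtVanish R 1 W A) (hB : ExtVanish R 1 W B) :
    ExtVanish R 1 W D := by
  obtain ⟨ha, hb, hab⟩ := hs
  obtain ⟨P, ε, hP, -, hExt⟩ := exists_projective_forall_extVanish_one_iff W
  refine (hExt D).2 fun φ => ?_
  obtain ⟨β, hβ⟩ := (hExt B).1 hB (b ∘ₗ φ)
  obtain ⟨γ, hγ⟩ := Module.projective_lifting_property b β hb
  obtain ⟨δ, hδ⟩ := exists_lift_of_exact ha hab (φ - γ ∘ₗ ε.ker.subtype) fun x => by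
    simpa [hβ, sub_eq_zero] using congr($hγ x).symm
  obtain ⟨α, hα⟩ := (hExt A).1 hA δ
  exact ⟨γ + a ∘ₗ α, fun x => by simp [hα, hδ]⟩

theorem ExtVanish.exists_lift {W A B C : ModuleCat.{u} R} (hW : ExtVanish R 1 W A)
    {f : A →ₗ[R] B} {g : B →ₗ[R] C} (hs : ShortExactSeq R A B C f g) (h : W →ₗ[R] C) :
    ∃ k : W →ₗ[R] B, ∀ x, g (k x) = h x := by
  obtain ⟨hf, hg, hfg⟩ := hs
  obtain ⟨P, ε, hP, hε, hExt⟩ := exists_projective_forall_extVanish_one_iff W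
  obtain ⟨y, hy⟩ := Module.projective_lifting_property g (h ∘ₗ ε) hg
  have hy' : ∀ x, g (y x) = h (ε x) := fun x => congr($hy x)
  obtain ⟨z, hz⟩ := exists_lift_of_exact hf hfg (y ∘ₗ ε.ker.subtype) fun x => by simp [hy']
  obtain ⟨t, ht⟩ := (hExt A).1 hW z
  obtain ⟨k, hk⟩ := exists_desc_of_exact (LinearMap.exact_subtype_ker_map ε) hε (y - f ∘ₗ t)
    fun x => by simp [ht, hz]
  refine ⟨k, fun x => ?_⟩
  obtain ⟨x, rfl⟩ := hε x
  simp [hk, hy', hfg.apply_apply_eq_zero]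

theorem ExtVanish.exists_retraction {A B C : ModuleCat.{u} R} (hC : ExtVanish R 1 C A)
    {f : A →ₗ[R] B} {g : B →ₗ[R] C} (hs : ShortExactSeq R A B C f g) :
    ∃ r : B →ₗ[R] A, ∀ x, r (f x) = x := by
  obtain ⟨s, hs'⟩ := hC.exists_lift hs LinearMap.id
  have hsplit : (Function.Injective f ∧ ∃ s, g ∘ₗ s = LinearMap.id) ↔
      Function.Surjective g ∧ ∃ r, r ∘ₗ f = LinearMap.id := hs.2.2.split_tfae'.out 0 1
  obtain ⟨-, r, hr⟩ := hsplit.1 ⟨hs.1, s, LinearMap.ext hs'⟩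
  exact ⟨r, LinearMap.congr_fun hr⟩

theorem extVanish_one_of_exists_lift {W L E C : ModuleCat.{u} R} (hE : Module.Injective R E)
    {f : L →ₗ[R] E} {g : E →ₗ[R] C} (hs : ShortExactSeq R L E C f g)
    (hlift : ∀ h : W →ₗ[R] C, ∃ k : W →ₗ[R] E, ∀ x, g (k x) = h x) : ExtVanish R 1 W L := by
  obtain ⟨hf, -, hfg⟩ := hs
  obtain ⟨P, ε, -, hε, hExt⟩ := exists_projective_forall_extVanish_one_iff W
  refine (hExt L).2 fun φ => ?_
  obtain ⟨y, hy⟩ := hE.out ε.ker.subtype (Submodule.injective_subtype _) (f ∘ₗ φ)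
  have hy' : ∀ x : ε.ker, y x = f (φ x) := hy
  obtain ⟨h, hh⟩ := exists_desc_of_exact (LinearMap.exact_subtype_ker_map ε) hε (g ∘ₗ y)
    fun x => by simp [hy', hfg.apply_apply_eq_zero]
  obtain ⟨k, hk⟩ := hlift h
  obtain ⟨ψ, hψ⟩ := exists_lift_of_exact hf hfg (y - k ∘ₗ ε) fun x => by simp [hk, hh]
  exact ⟨ψ, fun x => hf (by simp [hψ, hy'])⟩

theorem injective_prod {I J : Type u} [AddCommGroup I] [AddCommGroup J] [Module R I]
    [Module R J] (hI : Module.Injective R I) (hJ : Module.Injective R J) :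
    Module.Injective R (I × J) where
  out X Y _ _ _ _ f hf g := by
    obtain ⟨h, hh⟩ := hI.out f hf (LinearMap.fst R I J ∘ₗ g)
    obtain ⟨k, hk⟩ := hJ.out f hf (LinearMap.snd R I J ∘ₗ g)
    exact ⟨h.prod k, fun x => Prod.ext (hh x) (hk x)⟩

theorem injective_of_retract {I J : Type u} [AddCommGroup I] [AddCommGroup J] [Module R I]
    [Module R J] (hI : Module.Injective R I) {s : J →ₗ[R] I} {r : I →ₗ[R] J}
    (hrs : ∀ x, r (s x) = x) : Module.Injective R J where
  out X Y _ _ _ _ f hf g := by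
    obtain ⟨h, hh⟩ := hI.out f hf (s ∘ₗ g)
    exact ⟨r ∘ₗ h, fun x => by simp [hh, hrs]⟩

/-- The right `Ext¹`-orthogonal class `𝒯^⊥` of a class of modules `𝒯`. -/
def ExtOrthogonal (𝒯 : ModuleCat.{u} R → Prop) (L : ModuleCat.{u} R) : Prop :=
  ∀ W : ModuleCat.{u} R, 𝒯 W → ExtVanish R 1 W L

/-- `M` has an injective presentation with kernel in `𝒬`: a short exact sequence
`0 → A → I → M → 0` with `I` injective and `A` in `𝒬`. -/
def HasInjectivePresentation (𝒬 : ModuleCat.{u} R → Prop) (M : ModuleCat.{u} R) : Prop :=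
  ∃ (A I : ModuleCat.{u} R) (i : A →ₗ[R] I) (p : I →ₗ[R] M),
    𝒬 A ∧ Module.Injective R I ∧ ShortExactSeq R A I M i p

/-- `M` has an injective copresentation with cokernel in `𝒬`: a short exact sequence
`0 → M → I → B → 0` with `I` injective and `B` in `𝒬`. -/
def HasInjectiveCopresentation (𝒬 : ModuleCat.{u} R → Prop) (M : ModuleCat.{u} R) : Prop :=
  ∃ (I B : ModuleCat.{u} R) (i : M →ₗ[R] I) (p : I →ₗ[R] B),
    𝒬 B ∧ Module.Injective R I ∧ ShortExactSeq R M I B i p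

/-- `D` is an extension of a module in `𝒬` by a module in `𝒬`. -/
def IsExtensionIn (𝒬 : ModuleCat.{u} R → Prop) (D : ModuleCat.{u} R) : Prop :=
  ∃ (A B : ModuleCat.{u} R) (a : A →ₗ[R] D) (b : D →ₗ[R] B),
    𝒬 A ∧ 𝒬 B ∧ ShortExactSeq R A D B a b

/-- `M` is a module of cycles `Ker (I n → I (n + 1))`, up to isomorphism, of a `Hom(𝒯, -)`-exact
exact complex of injective modules. Unlike `GorensteinRelInjective`, this leaves the degree free,
so that the neighbouring cycles are visibly of the same kind. -/
def IsCycleModule (𝒯 : ModuleCat.{u} R → Prop) (M : ModuleCat.{u} R) : Prop :=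
  ∃ (I : ℤ → ModuleCat.{u} R) (d : ∀ n : ℤ, I n →ₗ[R] I (n + 1)) (n : ℤ) (ι : M →ₗ[R] I n),
    IsTotallyAcyclicInjComplex R 𝒯 I d ∧ Function.Injective ι ∧ Function.Exact ι (d n)

variable {𝒯 𝒬 𝒬' : ModuleCat.{u} R → Prop}

theorem HasInjectivePresentation.mono (h𝒬 : ∀ A, 𝒬 A → 𝒬' A) {M : ModuleCat.{u} R} :
    HasInjectivePresentation 𝒬 M → HasInjectivePresentation 𝒬' M :=
  fun ⟨A, I, i, p, hA, h⟩ => ⟨A, I, i, p, h𝒬 A hA, h⟩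

theorem HasInjectiveCopresentation.mono (h𝒬 : ∀ B, 𝒬 B → 𝒬' B) {M : ModuleCat.{u} R} :
    HasInjectiveCopresentation 𝒬 M → HasInjectiveCopresentation 𝒬' M :=
  fun ⟨I, B, i, p, hB, h⟩ => ⟨I, B, i, p, h𝒬 B hB, h⟩

theorem HasInjectivePresentation.of_extension {A D B : ModuleCat.{u} R} {a : A →ₗ[R] D}
    {b : D →ₗ[R] B} (hs : ShortExactSeq R A D B a b)
    (hExt : ExtOrthogonal (fun J => Module.Injective R J) A)
    (hA : HasInjectivePresentation 𝒬 A) (hB : HasInjectivePresentation 𝒬 B) :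
    HasInjectivePresentation (IsExtensionIn 𝒬) D := by
  obtain ⟨A', I, i, p, hA', hI, hsA⟩ := hA
  obtain ⟨B', J, j, q, hB', hJ, hsB⟩ := hB
  obtain ⟨σ, hσ⟩ := (hExt J hJ).exists_lift hs q
  obtain ⟨D', a', b', k, r, hD', hsD⟩ := hs.horseshoe_left hsA hsB hσ
  exact ⟨D', _, k, r, ⟨A', B', a', b', hA', hB', hD'⟩, injective_prod hI hJ, hsD⟩

theorem HasInjectiveCopresentation.of_extension {A D B : ModuleCat.{u} R} {a : A →ₗ[R] D}
    {b : D →ₗ[R] B} (hs : ShortExactSeq R A D B a b)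
    (hA : HasInjectiveCopresentation 𝒬 A) (hB : HasInjectiveCopresentation 𝒬 B) :
    HasInjectiveCopresentation (IsExtensionIn 𝒬) D := by
  obtain ⟨I, A', i, p, hA', hI, hsA⟩ := hA
  obtain ⟨J, B', j, q, hB', hJ, hsB⟩ := hB
  obtain ⟨φ, hφ⟩ := hI.out a hs.1 i
  obtain ⟨D', a', b', k, r, hD', hsD⟩ := hs.horseshoe_right hsA hsB hφ
  exact ⟨_, D', k, r, ⟨A', B', a', b', hA', hB', hD'⟩, injective_prod hI hJ, hsD⟩

theorem exists_int_chain {α : Type*} {r : α → α → Prop} (hpred : ∀ y, ∃ x, r x y)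
    (hsucc : ∀ x, ∃ y, r x y) (x₀ : α) :
    ∃ Z : ℤ → α, Z 0 = x₀ ∧ ∀ n, r (Z n) (Z (n + 1)) := by
  choose pred hpred using hpred
  choose succ hsucc using hsucc
  let Z : ℤ → α
    | .ofNat n => succ^[n] x₀
    | .negSucc n => pred^[n + 1] x₀
  refine ⟨Z, rfl, ?_⟩
  rintro (n | _ | n)
  · change r (succ^[n] x₀) (succ^[n + 1] x₀)
    rw [Function.iterate_succ_apply']
    exact hsucc _
  · exact hpred x₀
  · change r (pred^[n + 2] x₀) (pred^[n + 1] x₀)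
    rw [Function.iterate_succ_apply']
    exact hpred _

theorem gorensteinRelInjective_of_chain {Z I : ℤ → ModuleCat.{u} R} {i : ∀ n, Z n →ₗ[R] I n}
    {p : ∀ n, I n →ₗ[R] Z (n + 1)} (hZ : ∀ n, ExtOrthogonal 𝒯 (Z n))
    (hI : ∀ n, Module.Injective R (I n))
    (hs : ∀ n, ShortExactSeq R (Z n) (I n) (Z (n + 1)) (i n) (p n)) :
    GorensteinRelInjective R 𝒯 (Z 1) := by
  have hi n : Function.Injective (i n) := (hs n).1
  have hp n : Function.Surjective (p n) := (hs n).2.1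
  have hip n : Function.Exact (i n) (p n) := (hs n).2.2
  have hipp n : Function.Exact (i (n + 1) ∘ₗ p n) (p (n + 1)) :=
    (hp n).comp_exact_iff_exact.2 (hip (n + 1))
  refine ⟨I, fun n => i (n + 1) ∘ₗ p n, p 0, ⟨hI, fun n => ?_, fun W hW n h => ⟨fun hh => ?_, ?_⟩⟩,
    hp 0, hipp (-1)⟩
  · exact (hi _).comp_exact_iff_exact.2 (hipp n)
  · obtain ⟨z, hz⟩ := exists_lift_of_exact (hi (n + 1)) (hip (n + 1)) h fun w =>
      hi _ ((LinearMap.congr_fun hh w).trans (map_zero _).symm)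
    obtain ⟨k, hk⟩ := (hZ n W hW).exists_lift (hs n) z
    exact ⟨k, LinearMap.ext fun w => by simp [hk, hz]⟩
  · rintro ⟨k, rfl⟩
    exact LinearMap.ext fun w => by simp [(hip (n + 1)).apply_apply_eq_zero]

theorem GorensteinRelInjective.coinduction (hExt : ∀ M, 𝒬 M → ExtOrthogonal 𝒯 M)
    (hpres : ∀ M, 𝒬 M → HasInjectivePresentation 𝒬 M)
    (hcopres : ∀ M, 𝒬 M → HasInjectiveCopresentation 𝒬 M) {M : ModuleCat.{u} R} (hM : 𝒬 M) :
    GorensteinRelInjective R 𝒯 M := by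
  let r (A B : Subtype 𝒬) : Prop :=
    ∃ (I : ModuleCat.{u} R) (i : A.1 →ₗ[R] I) (p : I →ₗ[R] B.1),
      Module.Injective R I ∧ ShortExactSeq R A.1 I B.1 i p
  obtain ⟨Z, hZ₀, hZ⟩ := exists_int_chain (r := r)
    (fun ⟨M, hM⟩ => have ⟨A, I, i, p, hA, h⟩ := hpres M hM; ⟨⟨A, hA⟩, I, i, p, h⟩)
    (fun ⟨M, hM⟩ => have ⟨I, B, i, p, hB, h⟩ := hcopres M hM; ⟨⟨B, hB⟩, I, i, p, h⟩) ⟨M, hM⟩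
  have hZ' n : r (Z (n - 1)) (Z (n + 1 - 1)) := by
    simpa only [sub_add_cancel, add_sub_cancel_right] using hZ (n - 1)
  choose I i p hI hs using hZ'
  have h := gorensteinRelInjective_of_chain (fun n => hExt _ (Z (n - 1)).2) hI hs
  rwa [sub_self, hZ₀] at h

theorem IsTotallyAcyclicInjComplex.exists_shortExactSeq {I : ℤ → ModuleCat.{u} R}
    {d : ∀ n : ℤ, I n →ₗ[R] I (n + 1)} (h : IsTotallyAcyclicInjComplex R 𝒯 I d) (n : ℤ)
    {A B : ModuleCat.{u} R} {i : A →ₗ[R] I n} (hi : Function.Injective i)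
    (hid : Function.Exact i (d n)) {j : B →ₗ[R] I (n + 1)} (hj : Function.Injective j)
    (hjd : Function.Exact j (d (n + 1))) :
    ∃ p, ShortExactSeq R A (I n) B i p ∧ ExtOrthogonal 𝒯 A := by
  obtain ⟨hI, hd, h𝒯⟩ := h
  obtain ⟨p, hp⟩ := exists_lift_of_exact hj hjd (d n) (hd n).apply_apply_eq_zero
  have hs : ShortExactSeq R A (I n) B i p := by
    refine ⟨hi, fun b => ?_, fun x => ?_⟩
    · obtain ⟨x, hx⟩ := (hd n _).1 (hjd.apply_apply_eq_zero b)
      exact ⟨x, hj (by rw [hp, hx])⟩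
    · rw [← map_eq_zero_iff j hj, hp, hid x]
  refine ⟨p, hs, fun W hW => extVanish_one_of_exists_lift (hI n) hs fun f => ?_⟩
  obtain ⟨k, hk⟩ := (h𝒯 W hW n (j ∘ₗ f)).1
    (LinearMap.ext fun w => hjd.apply_apply_eq_zero (f w))
  exact ⟨k, fun w => hj ((hp _).trans congr($hk w))⟩

theorem IsCycleModule.hasInjectivePresentation {M : ModuleCat.{u} R} (hM : IsCycleModule 𝒯 M) :
    HasInjectivePresentation (IsCycleModule 𝒯) M := by
  obtain ⟨I, d, n, ι, h, hι, hιd⟩ := hM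
  obtain ⟨n, rfl⟩ : ∃ m, n = m + 1 := ⟨n - 1, (sub_add_cancel n 1).symm⟩
  have hker := LinearMap.exact_subtype_ker_map (d n)
  obtain ⟨p, hp, -⟩ := h.exists_shortExactSeq n (A := ModuleCat.of R (d n).ker)
    (Submodule.injective_subtype _) hker hι hιd
  exact ⟨_, I n, _, p, ⟨I, d, n, _, h, Submodule.injective_subtype _, hker⟩, h.1 n, hp⟩

theorem IsCycleModule.extOrthogonal_and_hasInjectiveCopresentation {M : ModuleCat.{u} R}
    (hM : IsCycleModule 𝒯 M) :
    ExtOrthogonal 𝒯 M ∧ HasInjectiveCopresentation (IsCycleModule 𝒯) M := by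
  obtain ⟨I, d, n, ι, h, hι, hιd⟩ := hM
  have hker := LinearMap.exact_subtype_ker_map (d (n + 1))
  obtain ⟨p, hp, hExt⟩ := h.exists_shortExactSeq n (B := ModuleCat.of R (d (n + 1)).ker) hι hιd
    (Submodule.injective_subtype _) hker
  exact ⟨hExt, I n, _, ι, p, ⟨I, d, n + 1, _, h, Submodule.injective_subtype _, hker⟩, h.1 n, hp⟩

theorem GorensteinRelInjective.isCycleModule {M : ModuleCat.{u} R}
    (hM : GorensteinRelInjective R 𝒯 M) : IsCycleModule 𝒯 M := by
  obtain ⟨I, d, π, h, hπ, hdπ⟩ := hM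
  have hd : Function.Exact (d (-1)) (d 0) := h.2.1 (-1)
  obtain ⟨ι, hι⟩ := exists_desc_of_exact hdπ hπ (d 0) hd.apply_apply_eq_zero
  refine ⟨I, d, 0 + 1, ι, h, (injective_iff_map_eq_zero _).2 fun m hm => ?_, ?_⟩
  · obtain ⟨x, rfl⟩ := hπ m
    exact (hdπ x).2 ((hd x).1 ((hι x).symm.trans hm))
  · have hιπ : ι ∘ₗ π = d 0 := LinearMap.ext hι
    exact hπ.comp_exact_iff_exact.1 (hιπ ▸ h.2.1 0)

theorem IsCycleModule.gorensteinRelInjective {M : ModuleCat.{u} R} (hM : IsCycleModule 𝒯 M) :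
    GorensteinRelInjective R 𝒯 M :=
  GorensteinRelInjective.coinduction
    (fun _ h => h.extOrthogonal_and_hasInjectiveCopresentation.1)
    (fun _ h => h.hasInjectivePresentation)
    (fun _ h => h.extOrthogonal_and_hasInjectiveCopresentation.2) hM

theorem GorensteinRelInjective.extOrthogonal {M : ModuleCat.{u} R}
    (hM : GorensteinRelInjective R 𝒯 M) : ExtOrthogonal 𝒯 M :=
  hM.isCycleModule.extOrthogonal_and_hasInjectiveCopresentation.1

theorem GorensteinRelInjective.hasInjectivePresentation {M : ModuleCat.{u} R}
    (hM : GorensteinRelInjective R 𝒯 M) :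
    HasInjectivePresentation (GorensteinRelInjective R 𝒯) M :=
  hM.isCycleModule.hasInjectivePresentation.mono fun _ h => h.gorensteinRelInjective

theorem GorensteinRelInjective.hasInjectiveCopresentation {M : ModuleCat.{u} R}
    (hM : GorensteinRelInjective R 𝒯 M) :
    HasInjectiveCopresentation (GorensteinRelInjective R 𝒯) M :=
  hM.isCycleModule.extOrthogonal_and_hasInjectiveCopresentation.2.mono
    fun _ h => h.gorensteinRelInjective

theorem GorensteinRelInjective.of_extOrthogonal {M : ModuleCat.{u} R} (hExt : ExtOrthogonal 𝒯 M)
    (hpres : HasInjectivePresentation (GorensteinRelInjective R 𝒯) M)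
    (hcopres : HasInjectiveCopresentation (GorensteinRelInjective R 𝒯) M) :
    GorensteinRelInjective R 𝒯 M := by
  let 𝒬 (X : ModuleCat.{u} R) : Prop := ExtOrthogonal 𝒯 X ∧
    HasInjectivePresentation (GorensteinRelInjective R 𝒯) X ∧
    HasInjectiveCopresentation (GorensteinRelInjective R 𝒯) X
  have h𝒬 (X : ModuleCat.{u} R) (hX : GorensteinRelInjective R 𝒯 X) : 𝒬 X :=
    ⟨hX.extOrthogonal, hX.hasInjectivePresentation, hX.hasInjectiveCopresentation⟩
  exact GorensteinRelInjective.coinduction (𝒬 := 𝒬) (fun _ h => h.1) (fun _ h => h.2.1.mono h𝒬)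
    (fun _ h => h.2.2.mono h𝒬) ⟨hExt, hpres, hcopres⟩

theorem GorensteinRelInjective.of_isExtensionIn
    (h𝒯 : ∀ E : ModuleCat.{u} R, Module.Injective R E → 𝒯 E) {D : ModuleCat.{u} R}
    (hD : IsExtensionIn (GorensteinRelInjective R 𝒯) D) : GorensteinRelInjective R 𝒯 D := by
  refine GorensteinRelInjective.coinduction (𝒬 := IsExtensionIn (GorensteinRelInjective R 𝒯))
    ?_ ?_ ?_ hD
  · rintro D ⟨A, B, a, b, hA, hB, hs⟩ W hW
    exact .of_shortExactSeq hs (hA.extOrthogonal W hW) (hB.extOrthogonal W hW)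
  · rintro D ⟨A, B, a, b, hA, hB, hs⟩
    exact .of_extension hs (fun E hE => hA.extOrthogonal E (h𝒯 E hE))
      hA.hasInjectivePresentation hB.hasInjectivePresentation
  · rintro D ⟨A, B, a, b, hA, hB, hs⟩
    exact .of_extension hs hA.hasInjectiveCopresentation hB.hasInjectiveCopresentation

theorem HasInjectivePresentation.kernel {L D E : ModuleCat.{u} R} {l : L →ₗ[R] D}
    {ρ : D →ₗ[R] E} (hs : ShortExactSeq R L D E l ρ) (h𝒬 : ∀ A, 𝒬 A → ExtVanish R 1 E A)
    (hL : ExtVanish R 1 E L) (hD : HasInjectivePresentation 𝒬 D) :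
    HasInjectivePresentation 𝒬 L := by
  obtain ⟨K, I, κ, p, hK, hI, hsD⟩ := hD
  obtain ⟨I', κ', p', j, q, hsL, hsI⟩ := hsD.exists_preimage hs
  obtain ⟨r, hr⟩ := (ExtVanish.of_shortExactSeq hsL (h𝒬 K hK) hL).exists_retraction hsI
  exact ⟨K, I', κ', p', hK, injective_of_retract hI hr, hsL⟩

theorem HasInjectiveCopresentation.kernel {L M N : ModuleCat.{u} R} {f : L →ₗ[R] M}
    {g : M →ₗ[R] N} (hs : ShortExactSeq R L M N f g) (hM : HasInjectiveCopresentation 𝒬 M)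
    (hN : 𝒬 N) : HasInjectiveCopresentation (IsExtensionIn 𝒬) L := by
  obtain ⟨J, B, j, q, hB, hJ, hsM⟩ := hM
  obtain ⟨C, i, π, a, b, hsL, hsC⟩ := hs.exists_quotient hsM
  exact ⟨J, C, i, π, ⟨N, B, a, b, hN, hB, hsC⟩, hJ, hsL⟩

theorem GorensteinRelInjective.kernel (h𝒯 : ∀ E : ModuleCat.{u} R, Module.Injective R E → 𝒯 E)
    {L M N : ModuleCat.{u} R} {f : L →ₗ[R] M} {g : M →ₗ[R] N} (hs : ShortExactSeq R L M N f g)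
    (hM : GorensteinRelInjective R 𝒯 M) (hN : GorensteinRelInjective R 𝒯 N)
    (hL : ExtOrthogonal (fun E => Module.Injective R E) L) : GorensteinRelInjective R 𝒯 L := by
  obtain ⟨K, E, i, p, hK, hE, hsN⟩ := hN.hasInjectivePresentation
  obtain ⟨D, a, b, l, ρ, hsKDM, hsLDE⟩ := hs.exists_pullback hsN
  have hD : GorensteinRelInjective R 𝒯 D := .of_isExtensionIn h𝒯 ⟨K, M, a, b, hK, hM, hsKDM⟩
  obtain ⟨r, hr⟩ := (hL E hE).exists_retraction hsLDE
  have hExtL : ExtOrthogonal 𝒯 L := fun W hW => (hD.extOrthogonal W hW).of_retract hr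
  have hpresL : HasInjectivePresentation (GorensteinRelInjective R 𝒯) L :=
    hD.hasInjectivePresentation.kernel hsLDE
      (fun _ hA => hA.extOrthogonal E (h𝒯 E hE)) (hL E hE)
  have hcopresL : HasInjectiveCopresentation (GorensteinRelInjective R 𝒯) L :=
    (hM.hasInjectiveCopresentation.kernel hs hN).mono fun _ => .of_isExtensionIn h𝒯
  exact .of_extOrthogonal hExtL hpresL hcopresL

theorem weakInjective_of_injective_s11 {E : ModuleCat.{u} R} (hE : Module.Injective R E) :
    WeakInjective R E :=
  fun W _ => extVanish_one_of_injective W hE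

theorem gorensteinWeakInjective_kernel_iff_general
    (h𝒯 : ∀ E : ModuleCat.{u} R, Module.Injective R E → 𝒯 E) {L M N : ModuleCat.{u} R}
    {f : L →ₗ[R] M} {g : M →ₗ[R] N} (hs : ShortExactSeq R L M N f g)
    (hM : GorensteinRelInjective R 𝒯 M) (hN : GorensteinRelInjective R 𝒯 N) :
    (GorensteinRelInjective R 𝒯 L ↔
      ∀ I : ModuleCat.{u} R, Module.Injective R I → ExtVanish R 1 I L) ∧
    (GorensteinRelInjective R 𝒯 L ↔ ∀ W : ModuleCat.{u} R, 𝒯 W → ExtVanish R 1 W L) := by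
  have h := GorensteinRelInjective.kernel h𝒯 hs hM hN
  exact ⟨⟨fun hL I hI => hL.extOrthogonal I (h𝒯 I hI), h⟩,
    GorensteinRelInjective.extOrthogonal, fun hL => h fun I hI => hL I (h𝒯 I hI)⟩

end

/-- Let `0 → L → M → N → 0` be exact with `M`, `N` Gorenstein weak injective. Then `L` is
Gorenstein weak injective iff `Ext^1_R(I, L) = 0` for every injective `I`, iff
`Ext^1_R(W, L) = 0` for every weak injective `W`. -/
theorem gorensteinWeakInjective_kernel_iff (L M N : ModuleCat.{u} R)
    (f : L →ₗ[R] M) (g : M →ₗ[R] N) (hse : ShortExactSeq R L M N f g)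
    (hM : GorensteinWeakInjective R M) (hN : GorensteinWeakInjective R N) :
    (GorensteinWeakInjective R L ↔
      ∀ I : ModuleCat.{u} R, Module.Injective R I → ExtVanish R 1 I L) ∧
    (GorensteinWeakInjective R L ↔
      ∀ W : ModuleCat.{u} R, WeakInjective R W → ExtVanish R 1 W L) := by
  exact gorensteinWeakInjective_kernel_iff_general (fun _ => weakInjective_of_injective_s11) hse hM hN
end
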